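/- arXiv:1903.03499 — 4 statements merged into one kernel-verified Lean document; each statement's English description precedes it below -/
import Mathlib

section
/- There is a constant C_n, depending only on n, with the following property (the Euclidean-space instance of the paper's Theorem 0.1 bounding dim P_d for ancient mean curvature flows): for every real d ≥ 1, if u_1, …, u_ℓ : ℝⁿ × (−∞,0) → ℝ are linearly independent functions such that each u_i is smooth and caloric (∂_t u_i = Δ_x u_i pointwise) and for each i there is a constant C_i with |u_i(x,t)| ≤ C_i (1 + ‖x‖^d + |t|^{d/2}) for all x ∈ ℝⁿ and t < 0, then ℓ ≤ C_n · dⁿ. -/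
open MeasureTheory Real

/-- The Euclidean Laplacian of `u` at `x`, as the sum of second partial derivatives. -/
noncomputable def lap {n : ℕ} (u : EuclideanSpace ℝ (Fin n) → ℝ)
    (x : EuclideanSpace ℝ (Fin n)) : ℝ :=
  ∑ i : Fin n, fderiv ℝ (fun y => fderiv ℝ u y (EuclideanSpace.single i 1)) x
    (EuclideanSpace.single i 1)

/-!
By Bernstein's method, a caloric function bounded by `M` on a parabolic cylinder of radius `R` has
spatial gradient at most a constant times `M / R` at the centre of its top. Hence each spatial
derivative maps an ancient caloric function of growth `a` to one of growth `a - 1`, and growth of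
negative order forces the function to vanish. Restrict to functions depending only on a set `S` of
spatial coordinates: for `i ∈ S`, the kernel of `∂ᵢ` consists of the functions depending only on
`S \ {i}`, so rank-nullity bounds the dimension at `(S, a)` by the sum of those at `(S, a - 1)` and
`(S \ {i}, a)`. This is Pascal's recursion, and it yields the sharp bound
`dim P_d ≤ (⌊d⌋ + n choose n)`.
-/

open Filter Metric Set Topology
open scoped ContDiff

section DirectionalDerivative

variable {E F : Type*} [NormedAddCommGroup E] [NormedSpace ℝ E] [NormedAddCommGroup F]
  [NormedSpace ℝ F]

/-- The directional derivative `∂ᵥ f`, as an operator on functions so that it can be iterated;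
it is `0` at the points where `f` is not differentiable. -/
noncomputable def dirDeriv (v : E) (f : E → F) (p : E) : F := fderiv ℝ f p v

lemma dirDeriv_congr {f g : E → F} {p : E} (h : f =ᶠ[𝓝 p] g) (v : E) :
    dirDeriv v f =ᶠ[𝓝 p] dirDeriv v g :=
  h.fderiv.fun_comp (· v)

lemma contDiffAt_dirDeriv {f : E → F} {p : E} {k m : ℕ∞ω} (hf : ContDiffAt ℝ k f p)
    (hmk : m + 1 ≤ k) (v : E) : ContDiffAt ℝ m (dirDeriv v f) p :=
  (hf.fderiv_right hmk).clm_apply contDiffAt_const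

lemma dirDeriv_const (c : F) (v : E) : dirDeriv v (fun _ : E => c) = 0 := by
  ext p
  simp [dirDeriv]

lemma dirDeriv_eq_zero_of_isOpen {f : E → F} {U : Set E} {p : E} (hU : IsOpen U)
    (hf : ∀ q ∈ U, f q = 0) (hp : p ∈ U) (v : E) : dirDeriv v f p = 0 := by
  have eventually_zero : f =ᶠ[𝓝 p] fun _ => 0 := by
    filter_upwards [hU.mem_nhds hp] using hf
  rw [(dirDeriv_congr eventually_zero v).eq_of_nhds, dirDeriv_const, Pi.zero_apply]

lemma dirDeriv_add {f g : E → F} {p : E} (hf : DifferentiableAt ℝ f p)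
    (hg : DifferentiableAt ℝ g p) (v : E) :
    dirDeriv v (f + g) p = dirDeriv v f p + dirDeriv v g p := by
  simp [dirDeriv, fderiv_add hf hg]

lemma dirDeriv_const_smul {f : E → F} {p : E} (hf : DifferentiableAt ℝ f p) (c : ℝ) (v : E) :
    dirDeriv v (c • f) p = c • dirDeriv v f p := by
  simp [dirDeriv, fderiv_const_smul hf]

lemma dirDeriv_mul {f g : E → ℝ} {p : E} (hf : DifferentiableAt ℝ f p)
    (hg : DifferentiableAt ℝ g p) (v : E) :
    dirDeriv v (f * g) p = f p * dirDeriv v g p + g p * dirDeriv v f p := by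
  simp [dirDeriv, fderiv_mul hf hg]

lemma dirDeriv_dirDeriv_comm {f : E → F} {p : E} (hf : ContDiffAt ℝ 2 f p) (v w : E) :
    dirDeriv v (dirDeriv w f) p = dirDeriv w (dirDeriv v f) p := by
  have eq_second_fderiv (a b : E) : dirDeriv a (dirDeriv b f) p = fderiv ℝ (fderiv ℝ f) p a b := by
    have hf' : DifferentiableAt ℝ (fderiv ℝ f) p :=
      (hf.fderiv_right (m := 1) (by norm_num)).differentiableAt one_ne_zero
    change fderiv ℝ (fun q => fderiv ℝ f q b) p a = _
    simp [fderiv_clm_apply hf' (differentiableAt_const b)]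
  rw [eq_second_fderiv, eq_second_fderiv]
  exact hf.isSymmSndFDerivAt (by simp) v w

lemma eventually_differentiableAt {f : E → F} {p : E} (hf : ContDiffAt ℝ 2 f p) :
    ∀ᶠ q in 𝓝 p, DifferentiableAt ℝ f q :=
  (hf.eventually (by simp)).mono fun _ hq => hq.differentiableAt two_ne_zero

lemma differentiableAt_dirDeriv {f : E → F} {p : E} (hf : ContDiffAt ℝ 2 f p) (v : E) :
    DifferentiableAt ℝ (dirDeriv v f) p :=
  (contDiffAt_dirDeriv (m := 1) hf (by norm_num) v).differentiableAt one_ne_zero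

lemma dirDeriv_dirDeriv_add {f g : E → F} {p : E} (hf : ContDiffAt ℝ 2 f p)
    (hg : ContDiffAt ℝ 2 g p) (v w : E) :
    dirDeriv v (dirDeriv w (f + g)) p =
      dirDeriv v (dirDeriv w f) p + dirDeriv v (dirDeriv w g) p := by
  have inner_eq : dirDeriv w (f + g) =ᶠ[𝓝 p] dirDeriv w f + dirDeriv w g := by
    filter_upwards [eventually_differentiableAt hf, eventually_differentiableAt hg] with q hfq hgq
    exact dirDeriv_add hfq hgq w
  rw [(dirDeriv_congr inner_eq v).eq_of_nhds,
    dirDeriv_add (differentiableAt_dirDeriv hf w) (differentiableAt_dirDeriv hg w)]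

lemma dirDeriv_dirDeriv_const_smul {f : E → F} {p : E} (hf : ContDiffAt ℝ 2 f p) (c : ℝ)
    (v w : E) : dirDeriv v (dirDeriv w (c • f)) p = c • dirDeriv v (dirDeriv w f) p := by
  have inner_eq : dirDeriv w (c • f) =ᶠ[𝓝 p] c • dirDeriv w f := by
    filter_upwards [eventually_differentiableAt hf] with q hfq
    exact dirDeriv_const_smul hfq c w
  rw [(dirDeriv_congr inner_eq v).eq_of_nhds,
    dirDeriv_const_smul (differentiableAt_dirDeriv hf w)]

lemma dirDeriv_dirDeriv_mul {f g : E → ℝ} {p : E} (hf : ContDiffAt ℝ 2 f p)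
    (hg : ContDiffAt ℝ 2 g p) (v : E) :
    dirDeriv v (dirDeriv v (f * g)) p = f p * dirDeriv v (dirDeriv v g) p +
      g p * dirDeriv v (dirDeriv v f) p + 2 * (dirDeriv v f p * dirDeriv v g p) := by
  have inner_eq : dirDeriv v (f * g) =ᶠ[𝓝 p] f * dirDeriv v g + g * dirDeriv v f := by
    filter_upwards [eventually_differentiableAt hf, eventually_differentiableAt hg] with q hfq hgq
    exact dirDeriv_mul hfq hgq v
  have hf₁ := hf.differentiableAt two_ne_zero
  have hg₁ := hg.differentiableAt two_ne_zero
  have hf₂ := differentiableAt_dirDeriv hf v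
  have hg₂ := differentiableAt_dirDeriv hg v
  rw [(dirDeriv_congr inner_eq v).eq_of_nhds, dirDeriv_add (hf₁.mul hg₂) (hg₁.mul hf₂),
    dirDeriv_mul hf₁ hg₂, dirDeriv_mul hg₁ hf₂]
  ring

lemma deriv_deriv_nonpos_of_isLocalMax {g : ℝ → ℝ} {a : ℝ} (hmax : IsLocalMax g a)
    (hg : ContinuousAt g a) : deriv (deriv g) a ≤ 0 := by
  by_contra! hpos
  have hmin : IsLocalMin g a := isLocalMin_of_deriv_deriv_pos hpos hmax.deriv_eq_zero hg
  have g_const : g =ᶠ[𝓝 a] fun _ => g a := by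
    filter_upwards [hmin, hmax] with s hge hle using le_antisymm hle hge
  have := g_const.deriv.deriv.eq_of_nhds
  simp_all

lemma hasDerivAt_comp_line {f : E → F} {p v : E} {s : ℝ}
    (hf : DifferentiableAt ℝ f (p + s • v)) :
    HasDerivAt (fun r : ℝ => f (p + r • v)) (dirDeriv v f (p + s • v)) s := by
  have line : HasDerivAt (fun r : ℝ => p + r • v) v s := by
    simpa using ((hasDerivAt_id s).smul_const v).const_add p
  exact hf.hasFDerivAt.comp_hasDerivAt s line

lemma dirDeriv_dirDeriv_nonpos {f : E → ℝ} {p v : E} (hf : ContDiffAt ℝ 2 f p)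
    (hmax : IsLocalMax (fun s : ℝ => f (p + s • v)) 0) : dirDeriv v (dirDeriv v f) p ≤ 0 := by
  have line_tendsto : Tendsto (fun s : ℝ => p + s • v) (𝓝 0) (𝓝 p) := by
    have : Continuous fun s : ℝ => p + s • v := by fun_prop
    simpa using this.tendsto 0
  have deriv_eq : deriv (fun s : ℝ => f (p + s • v)) =ᶠ[𝓝 0] fun s => dirDeriv v f (p + s • v) := by
    filter_upwards [line_tendsto.eventually (eventually_differentiableAt hf)] with s hs
    exact (hasDerivAt_comp_line hs).deriv
  have hf₂ : DifferentiableAt ℝ (dirDeriv v f) (p + (0 : ℝ) • v) := by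
    simpa using differentiableAt_dirDeriv hf v
  have hf₁ : DifferentiableAt ℝ f (p + (0 : ℝ) • v) := by
    simpa using hf.differentiableAt two_ne_zero
  have := deriv_deriv_nonpos_of_isLocalMax hmax (hasDerivAt_comp_line hf₁).continuousAt
  rwa [deriv_eq.deriv_eq, (hasDerivAt_comp_line hf₂).deriv, zero_smul, add_zero] at this

end DirectionalDerivative

/-- Space-time `ℝⁿ × ℝ`; the second coordinate is time. -/
abbrev SpaceTime (n : ℕ) : Type := EuclideanSpace ℝ (Fin n) × ℝ

/-- The `i`-th spatial coordinate direction of space-time. -/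
noncomputable def spaceDir {n : ℕ} (i : Fin n) : SpaceTime n := (EuclideanSpace.single i 1, 0)

/-- The unit time direction of space-time. -/
def timeDir {n : ℕ} : SpaceTime n := (0, 1)

/-- The heat operator `∂ₜ - Δₓ`. -/
noncomputable def heatOp {n : ℕ} (f : SpaceTime n → ℝ) (p : SpaceTime n) : ℝ :=
  dirDeriv timeDir f p - ∑ i, dirDeriv (spaceDir i) (dirDeriv (spaceDir i) f) p

/-- The squared length `|∇ₓ f|²` of the spatial gradient. -/
noncomputable def spaceGradSq {n : ℕ} (f : SpaceTime n → ℝ) (p : SpaceTime n) : ℝ :=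
  ∑ i, dirDeriv (spaceDir i) f p ^ 2

section HeatOperator

variable {n : ℕ} {f g : SpaceTime n → ℝ} {p : SpaceTime n}

lemma heatOp_congr (h : f =ᶠ[𝓝 p] g) : heatOp f p = heatOp g p := by
  simp only [heatOp, (dirDeriv_congr h _).eq_of_nhds,
    (dirDeriv_congr (dirDeriv_congr h _) _).eq_of_nhds]

lemma heatOp_add (hf : ContDiffAt ℝ 2 f p) (hg : ContDiffAt ℝ 2 g p) :
    heatOp (f + g) p = heatOp f p + heatOp g p := by
  simp only [heatOp, dirDeriv_dirDeriv_add hf hg, Finset.sum_add_distrib,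
    dirDeriv_add (hf.differentiableAt two_ne_zero) (hg.differentiableAt two_ne_zero)]
  ring

lemma heatOp_const_smul (hf : ContDiffAt ℝ 2 f p) (c : ℝ) :
    heatOp (c • f) p = c * heatOp f p := by
  simp only [heatOp, dirDeriv_dirDeriv_const_smul hf, smul_eq_mul, ← Finset.mul_sum,
    dirDeriv_const_smul (hf.differentiableAt two_ne_zero)]
  ring

lemma heatOp_mul (hf : ContDiffAt ℝ 2 f p) (hg : ContDiffAt ℝ 2 g p) :
    heatOp (f * g) p = f p * heatOp g p + g p * heatOp f p -
      2 * ∑ i, dirDeriv (spaceDir i) f p * dirDeriv (spaceDir i) g p := by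
  simp only [heatOp, dirDeriv_dirDeriv_mul hf hg, Finset.sum_add_distrib, ← Finset.mul_sum,
    dirDeriv_mul (hf.differentiableAt two_ne_zero) (hg.differentiableAt two_ne_zero)]
  ring

lemma heatOp_sq (hf : ContDiffAt ℝ 2 f p) :
    heatOp (f ^ 2) p = 2 * f p * heatOp f p - 2 * spaceGradSq f p := by
  rw [sq, heatOp_mul hf hf]
  simp only [spaceGradSq, sq]
  ring

lemma heatOp_sq_add_smul_sq (hf : ContDiffAt ℝ 2 f p) (hg : ContDiffAt ℝ 2 g p) (c : ℝ) :
    heatOp (f ^ 2 + c • g ^ 2) p = 2 * f p * heatOp f p - 2 * spaceGradSq f p +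
      c * (2 * g p * heatOp g p - 2 * spaceGradSq g p) := by
  have hf_sq : ContDiffAt ℝ 2 (f ^ 2) p := hf.pow 2
  have hg_sq : ContDiffAt ℝ 2 (g ^ 2) p := hg.pow 2
  have hcg_sq : ContDiffAt ℝ 2 (c • g ^ 2) p := hg_sq.const_smul c
  rw [heatOp_add hf_sq hcg_sq, heatOp_const_smul hg_sq, heatOp_sq hf, heatOp_sq hg]

lemma neg_four_mul_sum_sub_two_mul_spaceGradSq_mul_le (hf : DifferentiableAt ℝ f p)
    (hg : DifferentiableAt ℝ g p) :
    -(4 * (f p * g p) * ∑ i, dirDeriv (spaceDir i) f p * dirDeriv (spaceDir i) g p) -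
      2 * spaceGradSq (f * g) p ≤ 6 * g p ^ 2 * spaceGradSq f p := by
  simp only [spaceGradSq, dirDeriv_mul hf hg]
  rw [← sub_nonneg, Finset.mul_sum, Finset.mul_sum, Finset.mul_sum, ← Finset.sum_neg_distrib,
    ← Finset.sum_sub_distrib, ← Finset.sum_sub_distrib]
  refine Finset.sum_nonneg fun i _ => ?_
  linear_combination
    2 * sq_nonneg (f p * dirDeriv (spaceDir i) g p + 2 * g p * dirDeriv (spaceDir i) f p)

lemma heatOp_dirDeriv (hf : ContDiffAt ℝ 3 f p) (v : SpaceTime n) :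
    heatOp (dirDeriv v f) p = dirDeriv v (heatOp f) p := by
  have hf₂ : ContDiffAt ℝ 2 f p := hf.of_le (by norm_num)
  have dir_contDiffAt (w : SpaceTime n) : ContDiffAt ℝ 2 (dirDeriv w f) p :=
    contDiffAt_dirDeriv hf (by norm_num) w
  have third_comm (i : Fin n) : dirDeriv (spaceDir i) (dirDeriv (spaceDir i) (dirDeriv v f)) p =
      dirDeriv v (dirDeriv (spaceDir i) (dirDeriv (spaceDir i) f)) p := by
    have second_comm : dirDeriv (spaceDir i) (dirDeriv v f) =ᶠ[𝓝 p]
        dirDeriv v (dirDeriv (spaceDir i) f) := by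
      filter_upwards [hf₂.eventually (by simp)] with q hq
      exact dirDeriv_dirDeriv_comm hq _ _
    rw [(dirDeriv_congr second_comm _).eq_of_nhds, dirDeriv_dirDeriv_comm (dir_contDiffAt _)]
  have second_differentiableAt (i : Fin n) :=
    differentiableAt_dirDeriv (dir_contDiffAt (spaceDir i)) (spaceDir i)
  have dirDeriv_heatOp : dirDeriv v (heatOp f) p = dirDeriv v (dirDeriv timeDir f) p -
      ∑ i, dirDeriv v (dirDeriv (spaceDir i) (dirDeriv (spaceDir i) f)) p := by
    change fderiv ℝ (fun q => dirDeriv timeDir f q -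
      ∑ i, dirDeriv (spaceDir i) (dirDeriv (spaceDir i) f) q) p v = _
    rw [fderiv_fun_sub (differentiableAt_dirDeriv hf₂ _)
      (DifferentiableAt.fun_sum fun i _ => second_differentiableAt i),
      fderiv_fun_sum fun i _ => second_differentiableAt i]
    simp [dirDeriv]
  rw [dirDeriv_heatOp, heatOp, dirDeriv_dirDeriv_comm hf₂]
  simp only [third_comm]

lemma fderiv_slice_eq_dirDeriv {x : EuclideanSpace ℝ (Fin n)} {t : ℝ}
    (hf : DifferentiableAt ℝ f (x, t)) (v : EuclideanSpace ℝ (Fin n)) :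
    fderiv ℝ (fun y => f (y, t)) x v = dirDeriv (v, 0) f (x, t) := by
  have slice : HasFDerivAt (fun y => f (y, t)) _ x :=
    hf.hasFDerivAt.comp x (hasFDerivAt_prodMk_left (𝕜 := ℝ) x t)
  simp [slice.fderiv, dirDeriv]

lemma heatOp_eq_deriv_sub_lap {x : EuclideanSpace ℝ (Fin n)} {t : ℝ}
    (hf : ContDiffAt ℝ 2 f (x, t)) :
    heatOp f (x, t) = deriv (fun s => f (x, s)) t - lap (fun y => f (y, t)) x := by
  have time_part : deriv (fun s => f (x, s)) t = dirDeriv timeDir f (x, t) :=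
    ((hf.differentiableAt two_ne_zero).hasFDerivAt.comp_hasDerivAt t
      ((hasDerivAt_const t x).prodMk (hasDerivAt_id t))).deriv
  have space_part (v : EuclideanSpace ℝ (Fin n)) :
      fderiv ℝ (fun y => fderiv ℝ (fun z => f (z, t)) y v) x v =
        dirDeriv (v, 0) (dirDeriv (v, 0) f) (x, t) := by
    have first_eq : (fun y => fderiv ℝ (fun z => f (z, t)) y v) =ᶠ[𝓝 x]
        fun y => dirDeriv (v, 0) f (y, t) := by
      have slice_tendsto : Tendsto (fun y => (y, t)) (𝓝 x) (𝓝 (x, t)) :=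
        Continuous.tendsto (by fun_prop) x
      filter_upwards [slice_tendsto.eventually (eventually_differentiableAt hf)] with y hy
      exact fderiv_slice_eq_dirDeriv hy v
    rw [first_eq.fderiv_eq, fderiv_slice_eq_dirDeriv (differentiableAt_dirDeriv hf _)]
  simp only [heatOp, lap, time_part, space_part, spaceDir]

end HeatOperator

section CoordinateFunctions

variable {n : ℕ}

lemma contDiff_time_sub (c : ℝ) : ContDiff ℝ 2 fun p : SpaceTime n => p.2 - c :=
  contDiff_snd.sub contDiff_const

lemma dirDeriv_time_sub (c : ℝ) (v : SpaceTime n) :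
    dirDeriv v (fun p : SpaceTime n => p.2 - c) = fun _ => v.2 := by
  ext p
  have := (hasFDerivAt_snd (𝕜 := ℝ) (p := p)).sub_const c
  simp [dirDeriv, this.fderiv]

lemma heatOp_time_sub (c : ℝ) (p : SpaceTime n) : heatOp (fun q => q.2 - c) p = 1 := by
  simp [heatOp, dirDeriv_time_sub, dirDeriv_const, timeDir]

lemma contDiff_sub_norm_sub_sq (c : ℝ) (x : EuclideanSpace ℝ (Fin n)) :
    ContDiff ℝ 2 fun p : SpaceTime n => c - ‖p.1 - x‖ ^ 2 :=
  contDiff_const.sub ((contDiff_fst.sub contDiff_const).norm_sq ℝ)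

lemma dirDeriv_sub_norm_sub_sq (c : ℝ) (x : EuclideanSpace ℝ (Fin n)) (v : SpaceTime n) :
    dirDeriv v (fun p : SpaceTime n => c - ‖p.1 - x‖ ^ 2) =
      fun p => -2 * inner ℝ (p.1 - x) v.1 := by
  ext p
  have := ((hasFDerivAt_fst (𝕜 := ℝ) (p := p)).sub_const x).norm_sq.const_sub c
  simp [dirDeriv, this.fderiv, inner_sub_left]

lemma heatOp_sub_norm_sub_sq (c : ℝ) (x : EuclideanSpace ℝ (Fin n)) (p : SpaceTime n) :
    heatOp (fun q => c - ‖q.1 - x‖ ^ 2) p = 2 * n := by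
  have second_deriv (i : Fin n) :
      dirDeriv (spaceDir i) (fun q : SpaceTime n => -2 * inner ℝ (q.1 - x) (spaceDir i).1) p =
        -2 := by
    have := (((hasFDerivAt_fst (𝕜 := ℝ) (p := p)).sub_const x).inner ℝ
      (hasFDerivAt_const (spaceDir i).1 p)).const_mul (-2)
    rw [dirDeriv, this.fderiv]
    simp [spaceDir]
  simp only [heatOp, dirDeriv_sub_norm_sub_sq, second_deriv]
  simp [timeDir, mul_comm]

end CoordinateFunctions

section MaximumPrinciple

variable {n : ℕ} {w : SpaceTime n → ℝ} {U : Set (EuclideanSpace ℝ (Fin n))} {t₀ t₁ : ℝ}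

lemma heatOp_nonneg_of_isMaxOn (hU : IsOpen U) {q : SpaceTime n} (hq : q ∈ U ×ˢ Ioc t₀ t₁)
    (hw : ContDiffAt ℝ 2 w q) (hmax : IsMaxOn w (closure U ×ˢ Icc t₀ t₁) q) :
    0 ≤ heatOp w q := by
  obtain ⟨hqU, hq₀, hq₁⟩ := hq
  have time_part : 0 ≤ dirDeriv timeDir w q := by
    have past_segment : segment ℝ q (q + (t₀ - q.2) • timeDir) ⊆ closure U ×ˢ Icc t₀ t₁ := by
      refine ((convex_singleton q.1).prod (convex_Icc t₀ t₁)).segment_subset ?_ ?_ |>.trans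
        (prod_mono_left (singleton_subset_iff.2 (subset_closure hqU)))
      · exact ⟨rfl, hq₀.le, hq₁⟩
      · simp [timeDir, hq₀.le.trans hq₁]
    have := hmax.localize.hasFDerivWithinAt_nonpos
      (hw.differentiableAt two_ne_zero).hasFDerivAt.hasFDerivWithinAt
      (mem_posTangentConeAt_of_segment_subset past_segment)
    rw [map_smul, smul_eq_mul] at this
    exact nonneg_of_mul_nonpos_right this (sub_neg.2 hq₀)
  have space_part (i : Fin n) : dirDeriv (spaceDir i) (dirDeriv (spaceDir i) w) q ≤ 0 := by
    refine dirDeriv_dirDeriv_nonpos hw ?_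
    have line_continuous : Continuous fun s : ℝ => (q + s • spaceDir i).1 := by fun_prop
    have stays_in_U : ∀ᶠ s in 𝓝 (0 : ℝ), (q + s • spaceDir i).1 ∈ U :=
      line_continuous.continuousAt.eventually_mem (hU.mem_nhds (by simpa using hqU))
    filter_upwards [stays_in_U] with s hs
    rw [zero_smul, add_zero]
    exact hmax ⟨subset_closure hs, by simpa [spaceDir] using ⟨hq₀.le, hq₁⟩⟩
  exact sub_nonneg.2 ((Finset.sum_nonpos fun i _ => space_part i).trans time_part)

lemma le_of_heatOp_neg (hU : IsOpen U) (hUb : Bornology.IsBounded U)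
    (hw : ∀ p ∈ closure U ×ˢ Icc t₀ t₁, ContDiffAt ℝ 2 w p)
    (hL : ∀ p ∈ U ×ˢ Ioc t₀ t₁, heatOp w p < 0) {B : ℝ}
    (hB : ∀ p ∈ closure U ×ˢ Icc t₀ t₁, p ∉ U ×ˢ Ioc t₀ t₁ → w p ≤ B) :
    ∀ p ∈ closure U ×ˢ Icc t₀ t₁, w p ≤ B := by
  intro p hp
  obtain ⟨q, hq, hmax⟩ := (hUb.isCompact_closure.prod isCompact_Icc).exists_isMaxOn ⟨p, hp⟩
    fun r hr => (hw r hr).continuousAt.continuousWithinAt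
  have q_boundary : q ∉ U ×ˢ Ioc t₀ t₁ := fun hqU =>
    (hL q hqU).not_ge (heatOp_nonneg_of_isMaxOn hU hqU (hw q hq) hmax)
  exact (hmax hp).trans (hB q hq q_boundary)

lemma le_of_heatOp_nonpos (hU : IsOpen U) (hUb : Bornology.IsBounded U)
    (hw : ∀ p ∈ closure U ×ˢ Icc t₀ t₁, ContDiffAt ℝ 2 w p)
    (hL : ∀ p ∈ U ×ˢ Ioc t₀ t₁, heatOp w p ≤ 0) {B : ℝ}
    (hB : ∀ p ∈ closure U ×ˢ Icc t₀ t₁, p ∉ U ×ˢ Ioc t₀ t₁ → w p ≤ B) :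
    ∀ p ∈ closure U ×ˢ Icc t₀ t₁, w p ≤ B := by
  intro p hp
  -- Subtracting `ε (t - t₀)` makes the differential inequality strict.
  have tilted (ε : ℝ) (hε : 0 < ε) : w p + -ε * (p.2 - t₀) ≤ B := by
    have tilt_contDiffAt (q : SpaceTime n) : ContDiffAt ℝ 2 (-ε • fun q => q.2 - t₀) q :=
      ((contDiff_time_sub t₀).const_smul (-ε)).contDiffAt
    refine le_of_heatOp_neg (w := w + -ε • fun q => q.2 - t₀) hU hUb
      (fun q hq => (hw q hq).add (tilt_contDiffAt q)) (fun q hq => ?_) (fun q hq hq' => ?_) p hp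
    · rw [heatOp_add (hw q ⟨subset_closure hq.1, Ioc_subset_Icc_self hq.2⟩) (tilt_contDiffAt q),
        heatOp_const_smul (contDiff_time_sub t₀).contDiffAt, heatOp_time_sub]
      linarith [hL q hq]
    · have tilt_nonneg : 0 ≤ ε * (q.2 - t₀) := mul_nonneg hε.le (sub_nonneg.2 hq.2.1)
      simp only [Pi.add_apply, Pi.smul_apply, smul_eq_mul]
      linarith [hB q hq hq']
  have tilt_tendsto : Tendsto (fun ε : ℝ => w p + -ε * (p.2 - t₀)) (𝓝[>] 0) (𝓝 (w p)) := by
    have : Continuous fun ε : ℝ => w p + -ε * (p.2 - t₀) := by fun_prop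
    simpa using (this.tendsto 0).mono_left nhdsWithin_le_nhds
  exact le_of_tendsto tilt_tendsto (eventually_mem_nhdsWithin.mono tilted)

end MaximumPrinciple

/-- A smooth solution of the heat equation on the set `U`, which is meant to be open: the
derivatives in `heatOp` are unrestricted. -/
structure IsCaloricOn {n : ℕ} (u : SpaceTime n → ℝ) (U : Set (SpaceTime n)) : Prop where
  contDiffOn : ContDiffOn ℝ ∞ u U
  heatOp_eq_zero : ∀ p ∈ U, heatOp u p = 0

namespace IsCaloricOn

variable {n : ℕ} {u v : SpaceTime n → ℝ} {U : Set (SpaceTime n)} {p : SpaceTime n}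

lemma contDiffAt (hu : IsCaloricOn u U) (hU : IsOpen U) (hp : p ∈ U) (k : ℕ) :
    ContDiffAt ℝ k u p :=
  (hu.contDiffOn.contDiffAt (hU.mem_nhds hp)).of_le (mod_cast le_top)

lemma differentiableAt (hu : IsCaloricOn u U) (hU : IsOpen U) (hp : p ∈ U) :
    DifferentiableAt ℝ u p :=
  (hu.contDiffAt hU hp 1).differentiableAt one_ne_zero

lemma congr (hu : IsCaloricOn u U) (hU : IsOpen U) (h : EqOn v u U) : IsCaloricOn v U where
  contDiffOn := hu.contDiffOn.congr h
  heatOp_eq_zero p hp := by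
    rw [heatOp_congr (h.eventuallyEq_of_mem (hU.mem_nhds hp)), hu.heatOp_eq_zero p hp]

lemma add (hu : IsCaloricOn u U) (hv : IsCaloricOn v U) (hU : IsOpen U) :
    IsCaloricOn (u + v) U where
  contDiffOn := hu.contDiffOn.add hv.contDiffOn
  heatOp_eq_zero p hp := by
    rw [heatOp_add (hu.contDiffAt hU hp 2) (hv.contDiffAt hU hp 2), hu.heatOp_eq_zero p hp,
      hv.heatOp_eq_zero p hp, add_zero]

lemma const_smul (hu : IsCaloricOn u U) (hU : IsOpen U) (c : ℝ) : IsCaloricOn (c • u) U where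
  contDiffOn := hu.contDiffOn.const_smul c
  heatOp_eq_zero p hp := by
    rw [heatOp_const_smul (hu.contDiffAt hU hp 2), hu.heatOp_eq_zero p hp, mul_zero]

lemma dirDeriv (hu : IsCaloricOn u U) (hU : IsOpen U) (w : SpaceTime n) :
    IsCaloricOn (dirDeriv w u) U where
  contDiffOn p hp := (contDiffAt_dirDeriv (hu.contDiffOn.contDiffAt (hU.mem_nhds hp))
    (by simp) w).contDiffWithinAt
  heatOp_eq_zero p hp := by
    rw [heatOp_dirDeriv (hu.contDiffAt hU hp 3)]
    exact dirDeriv_eq_zero_of_isOpen hU hu.heatOp_eq_zero hp w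

end IsCaloricOn

section GradientEstimate

variable {n : ℕ}

/-- The cutoff `(R² - |x - x₀|²) (t - t₀ + R²)`, which vanishes on the parabolic boundary of the
cylinder of radius `R` whose top is centred at `c = (x₀, t₀)`. -/
noncomputable def cylinderCutoff (c : SpaceTime n) (R : ℝ) : SpaceTime n → ℝ :=
  (fun p => R ^ 2 - ‖p.1 - c.1‖ ^ 2) * fun p => p.2 - (c.2 - R ^ 2)

lemma contDiff_cylinderCutoff (c : SpaceTime n) (R : ℝ) : ContDiff ℝ 2 (cylinderCutoff c R) :=
  (contDiff_sub_norm_sub_sq _ _).mul (contDiff_time_sub _)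

lemma heatOp_cylinderCutoff (c p : SpaceTime n) (R : ℝ) :
    heatOp (cylinderCutoff c R) p =
      R ^ 2 - ‖p.1 - c.1‖ ^ 2 + 2 * n * (p.2 - (c.2 - R ^ 2)) := by
  rw [cylinderCutoff, heatOp_mul (contDiff_sub_norm_sub_sq _ _).contDiffAt
    (contDiff_time_sub _).contDiffAt, heatOp_time_sub, heatOp_sub_norm_sub_sq]
  simp only [dirDeriv_time_sub, spaceDir, mul_zero, Finset.sum_const_zero]
  ring

lemma spaceGradSq_cylinderCutoff (c p : SpaceTime n) (R : ℝ) :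
    spaceGradSq (cylinderCutoff c R) p =
      4 * ‖p.1 - c.1‖ ^ 2 * (p.2 - (c.2 - R ^ 2)) ^ 2 := by
  have partial_eq (i : Fin n) : dirDeriv (spaceDir i) (cylinderCutoff c R) p =
      -2 * (p.1 - c.1) i * (p.2 - (c.2 - R ^ 2)) := by
    rw [cylinderCutoff, dirDeriv_mul
      ((contDiff_sub_norm_sub_sq _ _).differentiable two_ne_zero).differentiableAt
      ((contDiff_time_sub _).differentiable two_ne_zero).differentiableAt,
      dirDeriv_time_sub, dirDeriv_sub_norm_sub_sq]
    simp only [spaceDir, EuclideanSpace.inner_single_right, one_mul, conj_trivial]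
    ring
  simp only [spaceGradSq, partial_eq, EuclideanSpace.real_norm_sq_eq, Finset.mul_sum,
    Finset.sum_mul]
  exact Finset.sum_congr rfl fun i _ => by ring

lemma cylinderCutoff_bound {c p : SpaceTime n} {R : ℝ}
    (hp : p ∈ closedBall c.1 R ×ˢ Icc (c.2 - R ^ 2) c.2) :
    cylinderCutoff c R p * heatOp (cylinderCutoff c R) p +
      3 * spaceGradSq (cylinderCutoff c R) p ≤ (2 * n + 13) * R ^ 6 := by
  obtain ⟨hx, ht₀, ht₁⟩ := hp
  rw [heatOp_cylinderCutoff, spaceGradSq_cylinderCutoff]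
  change (R ^ 2 - ‖p.1 - c.1‖ ^ 2) * (p.2 - (c.2 - R ^ 2)) * _ + _ ≤ _
  have norm_sq_le : ‖p.1 - c.1‖ ^ 2 ≤ R ^ 2 := by
    gcongr
    exact mem_closedBall_iff_norm.1 hx
  have : 0 ≤ R ^ 2 - ‖p.1 - c.1‖ ^ 2 := sub_nonneg.2 norm_sq_le
  have space_le : R ^ 2 - ‖p.1 - c.1‖ ^ 2 ≤ R ^ 2 := sub_le_self _ (sq_nonneg _)
  have : 0 ≤ p.2 - (c.2 - R ^ 2) := sub_nonneg.2 ht₀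
  have time_le : p.2 - (c.2 - R ^ 2) ≤ R ^ 2 := by linarith
  calc (R ^ 2 - ‖p.1 - c.1‖ ^ 2) * (p.2 - (c.2 - R ^ 2)) *
          (R ^ 2 - ‖p.1 - c.1‖ ^ 2 + 2 * n * (p.2 - (c.2 - R ^ 2))) +
        3 * (4 * ‖p.1 - c.1‖ ^ 2 * (p.2 - (c.2 - R ^ 2)) ^ 2)
    _ ≤ R ^ 2 * R ^ 2 * (R ^ 2 + 2 * n * R ^ 2) + 3 * (4 * R ^ 2 * (R ^ 2) ^ 2) := by gcongr
    _ = (2 * n + 13) * R ^ 6 := by ring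

-- Bernstein's auxiliary function: with `v = ∂ⱼu`, the term `-2|∇(ηv)|²` absorbs the mixed product
-- `∇η · ∇v` after completing the square, and `-2A|∇u|²` absorbs the multiple of `v²` that is left.
lemma heatOp_bernstein_nonpos {U : Set (SpaceTime n)} (hU : IsOpen U) {u η : SpaceTime n → ℝ}
    (hu : IsCaloricOn u U) {p : SpaceTime n} (hp : p ∈ U) (hη : ContDiffAt ℝ 2 η p) {A : ℝ}
    (hA : 0 ≤ A) (hηA : η p * heatOp η p + 3 * spaceGradSq η p ≤ A) (j : Fin n) :
    heatOp ((η * dirDeriv (spaceDir j) u) ^ 2 + A • u ^ 2) p ≤ 0 := by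
  set v := dirDeriv (spaceDir j) u
  have hv : IsCaloricOn v U := hu.dirDeriv hU _
  have hu₂ : ContDiffAt ℝ 2 u p := hu.contDiffAt hU hp 2
  have hv₂ : ContDiffAt ℝ 2 v p := hv.contDiffAt hU hp 2
  have v_sq_le : v p ^ 2 ≤ spaceGradSq u p :=
    Finset.single_le_sum (f := fun i => dirDeriv (spaceDir i) u p ^ 2)
      (fun i _ => sq_nonneg _) (Finset.mem_univ j)
  have complete_square :
      -(4 * (η p * v p) * ∑ i, dirDeriv (spaceDir i) η p * dirDeriv (spaceDir i) v p) -
        2 * spaceGradSq (η * v) p ≤ 6 * v p ^ 2 * spaceGradSq η p :=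
    neg_four_mul_sum_sub_two_mul_spaceGradSq_mul_le (hη.differentiableAt two_ne_zero)
      (hv₂.differentiableAt two_ne_zero)
  have expansion : heatOp ((η * v) ^ 2 + A • u ^ 2) p = 2 * v p ^ 2 * (η p * heatOp η p) -
      4 * (η p * v p) * ∑ i, dirDeriv (spaceDir i) η p * dirDeriv (spaceDir i) v p -
      2 * spaceGradSq (η * v) p - 2 * A * spaceGradSq u p := by
    have hηv : ContDiffAt ℝ 2 (η * v) p := hη.mul hv₂
    rw [heatOp_sq_add_smul_sq hηv hu₂, heatOp_mul hη hv₂, hv.heatOp_eq_zero p hp,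
      hu.heatOp_eq_zero p hp, Pi.mul_apply]
    ring
  calc heatOp ((η * v) ^ 2 + A • u ^ 2) p
    _ ≤ 2 * v p ^ 2 * (η p * heatOp η p + 3 * spaceGradSq η p) - 2 * A * spaceGradSq u p := by
      rw [expansion]
      linarith
    _ ≤ 2 * v p ^ 2 * A - 2 * A * v p ^ 2 := by gcongr
    _ = 0 := by ring

lemma cylinderCutoff_eq_zero {c p : SpaceTime n} {R : ℝ}
    (hp : p ∈ closedBall c.1 R ×ˢ Icc (c.2 - R ^ 2) c.2)
    (hp' : p ∉ ball c.1 R ×ˢ Ioc (c.2 - R ^ 2) c.2) : cylinderCutoff c R p = 0 := by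
  obtain ⟨hx, ht₀, ht₁⟩ := hp
  rw [cylinderCutoff, Pi.mul_apply, mul_eq_zero]
  by_cases hball : p.1 ∈ ball c.1 R
  · right
    have : ¬ c.2 - R ^ 2 < p.2 := fun ht => hp' ⟨hball, ht, ht₁⟩
    linarith
  · left
    rw [mem_closedBall_iff_norm] at hx
    rw [mem_ball_iff_norm, not_lt] at hball
    rw [le_antisymm hx hball, sub_self]

lemma cylinderCutoff_mul_dirDeriv_sq_add_le {U : Set (SpaceTime n)} (hU : IsOpen U)
    {u : SpaceTime n → ℝ} (hu : IsCaloricOn u U) {c : SpaceTime n} {R M : ℝ} (hR : 0 < R)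
    (hcU : closedBall c.1 R ×ˢ Icc (c.2 - R ^ 2) c.2 ⊆ U)
    (hM : ∀ p ∈ closedBall c.1 R ×ˢ Icc (c.2 - R ^ 2) c.2, |u p| ≤ M) (j : Fin n) :
    ∀ p ∈ closedBall c.1 R ×ˢ Icc (c.2 - R ^ 2) c.2,
      (cylinderCutoff c R p * dirDeriv (spaceDir j) u p) ^ 2 + (2 * n + 13) * R ^ 6 * u p ^ 2 ≤
        (2 * n + 13) * R ^ 6 * M ^ 2 := by
  set A : ℝ := (2 * n + 13) * R ^ 6
  have hA : 0 ≤ A := by positivity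
  have hη : ContDiff ℝ 2 (cylinderCutoff c R) := contDiff_cylinderCutoff c R
  have closure_eq : closure (ball c.1 R) = closedBall c.1 R := closure_ball c.1 hR.ne'
  rw [← closure_eq]
  refine le_of_heatOp_nonpos (w := (cylinderCutoff c R * dirDeriv (spaceDir j) u) ^ 2 + A • u ^ 2)
    isOpen_ball isBounded_ball (fun p hp => ?_) (fun p hp => ?_) (fun p hp hp' => ?_)
  · rw [closure_eq] at hp
    exact ((hη.contDiffAt.mul ((hu.dirDeriv hU _).contDiffAt hU (hcU hp) 2)).pow 2).add
      (((hu.contDiffAt hU (hcU hp) 2).pow 2).const_smul A)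
  · have hp_closed := prod_mono ball_subset_closedBall Ioc_subset_Icc_self hp
    exact heatOp_bernstein_nonpos hU hu (hcU hp_closed) hη.contDiffAt hA
      (cylinderCutoff_bound hp_closed) j
  · rw [closure_eq] at hp
    have u_sq_le : u p ^ 2 ≤ M ^ 2 := sq_le_sq' (abs_le.1 (hM p hp)).1 (abs_le.1 (hM p hp)).2
    simpa [cylinderCutoff_eq_zero hp hp'] using mul_le_mul_of_nonneg_left u_sq_le hA

lemma abs_dirDeriv_spaceDir_le {U : Set (SpaceTime n)} (hU : IsOpen U) {u : SpaceTime n → ℝ}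
    (hu : IsCaloricOn u U) {c : SpaceTime n} {R M : ℝ} (hR : 0 < R)
    (hcU : closedBall c.1 R ×ˢ Icc (c.2 - R ^ 2) c.2 ⊆ U)
    (hM : ∀ p ∈ closedBall c.1 R ×ˢ Icc (c.2 - R ^ 2) c.2, |u p| ≤ M) (j : Fin n) :
    |dirDeriv (spaceDir j) u c| ≤ √(2 * n + 13) * M / R := by
  have hc : c ∈ closedBall c.1 R ×ˢ Icc (c.2 - R ^ 2) c.2 :=
    ⟨mem_closedBall_self hR.le, sub_le_self _ (sq_nonneg R), le_rfl⟩
  have hM₀ : 0 ≤ M := (abs_nonneg _).trans (hM c hc)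
  have cutoff_center : cylinderCutoff c R c = R ^ 4 := by
    simp only [cylinderCutoff, Pi.mul_apply, sub_self, norm_zero]
    ring
  have scaled : R ^ 6 * (dirDeriv (spaceDir j) u c * R) ^ 2 ≤
      R ^ 6 * ((2 * n + 13) * M ^ 2) := by
    have center_le := cylinderCutoff_mul_dirDeriv_sq_add_le hU hu hR hcU hM j c hc
    rw [cutoff_center] at center_le
    have : 0 ≤ (2 * n + 13) * R ^ 6 * u c ^ 2 := by positivity
    linear_combination center_le + this
  have sq_le : (dirDeriv (spaceDir j) u c * R) ^ 2 ≤ (√(2 * n + 13) * M) ^ 2 := by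
    rw [mul_pow √_, Real.sq_sqrt (by positivity)]
    exact le_of_mul_le_mul_left scaled (by positivity)
  rw [le_div_iff₀ hR]
  simpa only [abs_mul, abs_of_pos hR] using abs_le_of_sq_le_sq sq_le (by positivity)

end GradientEstimate

/-- The past half-space `{t < 0}` of space-time, the domain of ancient solutions. -/
abbrev past (n : ℕ) : Set (SpaceTime n) := {p | p.2 < 0}

/-- `u` is `O(Rᵃ)` on the past parabolic cylinders `{|x| ≤ R, -R² ≤ t < 0}` with `R ≥ 1`. The
exponent may be negative, so that each spatial derivative lowers it by one. -/
def HasParabolicGrowth {n : ℕ} (a : ℝ) (u : SpaceTime n → ℝ) : Prop :=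
  ∃ C : ℝ, ∀ R : ℝ, 1 ≤ R → ∀ p ∈ past n, ‖p.1‖ ≤ R → -R ^ 2 ≤ p.2 → |u p| ≤ C * R ^ a

section Growth

variable {n : ℕ} {a : ℝ} {u v : SpaceTime n → ℝ}

lemma isOpen_past (n : ℕ) : IsOpen (past n) := isOpen_lt continuous_snd continuous_const

namespace HasParabolicGrowth

lemma congr (hu : HasParabolicGrowth a u) (h : EqOn v u (past n)) : HasParabolicGrowth a v := by
  obtain ⟨C, hC⟩ := hu
  exact ⟨C, fun R hR p hp hx ht => h hp ▸ hC R hR p hp hx ht⟩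

lemma add (hu : HasParabolicGrowth a u) (hv : HasParabolicGrowth a v) :
    HasParabolicGrowth a (u + v) := by
  obtain ⟨C, hC⟩ := hu
  obtain ⟨D, hD⟩ := hv
  refine ⟨C + D, fun R hR p hp hx ht => (abs_add_le _ _).trans ?_⟩
  rw [add_mul]
  exact add_le_add (hC R hR p hp hx ht) (hD R hR p hp hx ht)

lemma const_smul (hu : HasParabolicGrowth a u) (c : ℝ) : HasParabolicGrowth a (c • u) := by
  obtain ⟨C, hC⟩ := hu
  refine ⟨|c| * C, fun R hR p hp hx ht => ?_⟩
  rw [Pi.smul_apply, smul_eq_mul, abs_mul, mul_assoc]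
  exact mul_le_mul_of_nonneg_left (hC R hR p hp hx ht) (abs_nonneg c)

lemma dirDeriv (hu : HasParabolicGrowth a u) (hcal : IsCaloricOn u (past n)) (j : Fin n) :
    HasParabolicGrowth (a - 1) (dirDeriv (spaceDir j) u) := by
  obtain ⟨C, hC⟩ := hu
  refine ⟨√(2 * n + 13) * (C * 2 ^ a), fun R hR p hp hx ht => ?_⟩
  have hR₀ : 0 < R := one_pos.trans_le hR
  have bound_near : ∀ q ∈ closedBall p.1 R ×ˢ Icc (p.2 - R ^ 2) p.2,
      |u q| ≤ C * (2 * R) ^ a := by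
    rintro q ⟨hqx, hqt₀, hqt₁⟩
    refine hC (2 * R) (by linarith) q (hqt₁.trans_lt hp) ?_ (by nlinarith)
    linarith [norm_le_norm_add_norm_sub' q.1 p.1, mem_closedBall_iff_norm.1 hqx]
  calc |_root_.dirDeriv (spaceDir j) u p|
    _ ≤ √(2 * n + 13) * (C * (2 * R) ^ a) / R :=
      abs_dirDeriv_spaceDir_le (isOpen_past n) hcal hR₀ (fun q hq => hq.2.2.trans_lt hp)
        bound_near j
    _ = √(2 * n + 13) * (C * 2 ^ a) * R ^ (a - 1) := by
      rw [Real.mul_rpow zero_le_two hR₀.le, Real.rpow_sub_one hR₀.ne']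
      ring

lemma eq_zero_of_neg (hu : HasParabolicGrowth a u) (ha : a < 0) : EqOn u 0 (past n) := by
  obtain ⟨C, hC⟩ := hu
  intro p hp
  have bound_tendsto : Tendsto (fun R : ℝ => C * R ^ a) atTop (𝓝 0) := by
    simpa using (tendsto_rpow_neg_atTop (neg_pos.2 ha)).const_mul C
  have bound : ∀ᶠ R : ℝ in atTop, |u p| ≤ C * R ^ a := by
    filter_upwards [eventually_ge_atTop 1, eventually_ge_atTop ‖p.1‖, eventually_ge_atTop |p.2|]
      with R hR hx ht
    refine hC R hR p hp hx ?_
    nlinarith [neg_abs_le p.2]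
  exact abs_nonpos_iff.1 (ge_of_tendsto bound_tendsto bound)

end HasParabolicGrowth

lemma hasParabolicGrowth_of_abs_le {d C : ℝ} (hd : 0 ≤ d)
    (h : ∀ x t, t < 0 → |u (x, t)| ≤ C * (1 + ‖x‖ ^ d + |t| ^ (d / 2))) :
    HasParabolicGrowth d u := by
  refine ⟨|C| * 3, fun R hR p hp hx ht => (h p.1 p.2 hp).trans ?_⟩
  have one_le : 1 ≤ R ^ d := Real.one_le_rpow hR hd
  have space_le : ‖p.1‖ ^ d ≤ R ^ d := Real.rpow_le_rpow (norm_nonneg _) hx hd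
  have time_le : |p.2| ^ (d / 2) ≤ R ^ d := by
    have abs_le_sq : |p.2| ≤ R ^ 2 := by rw [abs_of_neg hp]; linarith
    calc |p.2| ^ (d / 2) ≤ (R ^ 2) ^ (d / 2) := by gcongr
      _ = R ^ d := by
        rw [← Real.rpow_natCast_mul (by linarith)]
        congr 1
        push_cast
        ring
  calc C * (1 + ‖p.1‖ ^ d + |p.2| ^ (d / 2))
    _ ≤ |C| * (1 + ‖p.1‖ ^ d + |p.2| ^ (d / 2)) := by gcongr; exact le_abs_self C
    _ ≤ |C| * (R ^ d + R ^ d + R ^ d) := by gcongr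
    _ = |C| * 3 * R ^ d := by ring

end Growth

/-- Ancient caloric functions of parabolic growth `a` that depend spatially only on the coordinates
in `S`. They are normalised to vanish outside `past n`, so that equality of functions on space-time
is equality on `past n`; for `S = Finset.univ` this is the space `P_a`. -/
def ancientCaloric {n : ℕ} (S : Finset (Fin n)) (a : ℝ) : Submodule ℝ (SpaceTime n → ℝ) where
  carrier := {u | IsCaloricOn u (past n) ∧ HasParabolicGrowth a u ∧
    (∀ i ∉ S, ∀ p ∈ past n, dirDeriv (spaceDir i) u p = 0) ∧ ∀ p ∉ past n, u p = 0}
  add_mem' := by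
    rintro u v ⟨hu, hua, huS, hu₀⟩ ⟨hv, hva, hvS, hv₀⟩
    refine ⟨hu.add hv (isOpen_past n), hua.add hva, fun i hi p hp => ?_, fun p hp => ?_⟩
    · rw [dirDeriv_add (hu.differentiableAt (isOpen_past n) hp)
        (hv.differentiableAt (isOpen_past n) hp), huS i hi p hp, hvS i hi p hp, add_zero]
    · rw [Pi.add_apply, hu₀ p hp, hv₀ p hp, add_zero]
  zero_mem' := by
    have dirDeriv_zero (v : SpaceTime n) : dirDeriv v (0 : SpaceTime n → ℝ) = 0 :=
      dirDeriv_const 0 v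
    refine ⟨⟨contDiffOn_const, fun p _ => ?_⟩, ⟨0, fun R _ p _ _ _ => ?_⟩, fun i _ p _ => ?_,
      fun p _ => rfl⟩
    · simp [heatOp, dirDeriv_zero]
    · simp
    · simp [dirDeriv_zero]
  smul_mem' := by
    rintro c u ⟨hu, hua, huS, hu₀⟩
    refine ⟨hu.const_smul (isOpen_past n) c, hua.const_smul c, fun i hi p hp => ?_,
      fun p hp => ?_⟩
    · rw [dirDeriv_const_smul (hu.differentiableAt (isOpen_past n) hp), huS i hi p hp, smul_zero]
    · rw [Pi.smul_apply, hu₀ p hp, smul_zero]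

section Dimension

variable {n : ℕ}

/-- The spatial derivative `∂ᵢ` on `ancientCaloric S a`, set to `0` outside `past n`. -/
noncomputable def spaceDerivMap (S : Finset (Fin n)) (a : ℝ) (i : Fin n) :
    ancientCaloric S a →ₗ[ℝ] SpaceTime n → ℝ where
  toFun u := (past n).indicator (dirDeriv (spaceDir i) u)
  map_add' u v := by
    rw [← indicator_add']
    refine indicator_congr fun p hp => dirDeriv_add ?_ ?_ _
    · exact u.2.1.differentiableAt (isOpen_past n) hp
    · exact v.2.1.differentiableAt (isOpen_past n) hp
  map_smul' c u := by
    refine (indicator_congr fun p hp => ?_).trans (Set.indicator_const_smul (past n) c _)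
    exact dirDeriv_const_smul (u.2.1.differentiableAt (isOpen_past n) hp) c _

lemma range_spaceDerivMap_le (S : Finset (Fin n)) (a : ℝ) (i : Fin n) :
    (spaceDerivMap S a i).range ≤ ancientCaloric S (a - 1) := by
  rintro _ ⟨⟨u, hu, hua, huS, -⟩, rfl⟩
  have eqOn : EqOn ((past n).indicator (dirDeriv (spaceDir i) u)) (dirDeriv (spaceDir i) u)
      (past n) := eqOn_indicator
  refine ⟨(hu.dirDeriv (isOpen_past n) _).congr (isOpen_past n) eqOn,
    (hua.dirDeriv hu i).congr eqOn, fun k hk p hp => ?_,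
    fun p hp => indicator_of_notMem hp _⟩
  calc dirDeriv (spaceDir k) ((past n).indicator (dirDeriv (spaceDir i) u)) p
    _ = dirDeriv (spaceDir k) (dirDeriv (spaceDir i) u) p :=
      (dirDeriv_congr (eqOn.eventuallyEq_of_mem ((isOpen_past n).mem_nhds hp)) _).eq_of_nhds
    _ = dirDeriv (spaceDir i) (dirDeriv (spaceDir k) u) p :=
      dirDeriv_dirDeriv_comm (hu.contDiffAt (isOpen_past n) hp 2) _ _
    _ = 0 := dirDeriv_eq_zero_of_isOpen (isOpen_past n) (huS k hk) hp _

lemma map_subtype_ker_spaceDerivMap_le (S : Finset (Fin n)) (a : ℝ) (i : Fin n) :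
    (spaceDerivMap (insert i S) a i).ker.map (Submodule.subtype _) ≤ ancientCaloric S a := by
  rintro _ ⟨⟨u, hu, hua, huS, hu₀⟩, hker, rfl⟩
  refine ⟨hu, hua, fun k hk p hp => ?_, hu₀⟩
  rcases eq_or_ne k i with rfl | hki
  · simpa [spaceDerivMap, indicator_of_mem hp] using congrFun hker p
  · exact huS k (by simp [hki, hk]) p hp

lemma rank_ancientCaloric_insert_le (S : Finset (Fin n)) (a : ℝ) (i : Fin n) :
    Module.rank ℝ (ancientCaloric (insert i S) a) ≤
      Module.rank ℝ (ancientCaloric (insert i S) (a - 1)) + Module.rank ℝ (ancientCaloric S a) := by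
  rw [← (spaceDerivMap (insert i S) a i).rank_range_add_rank_ker]
  refine add_le_add (Submodule.rank_mono (range_spaceDerivMap_le _ _ _)) ?_
  rw [(Submodule.equivSubtypeMap _ _).rank_eq]
  exact Submodule.rank_mono (map_subtype_ker_spaceDerivMap_le S a i)

lemma ancientCaloric_eq_bot_of_neg (S : Finset (Fin n)) {a : ℝ} (ha : a < 0) :
    ancientCaloric S a = ⊥ := by
  refine (Submodule.eq_bot_iff _).2 fun u hu => funext fun p => ?_
  by_cases hp : p ∈ past n
  · exact hu.2.1.eq_zero_of_neg ha hp
  · exact hu.2.2.2 p hp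

lemma fderiv_eq_zero_of_space_time {f : SpaceTime n → ℝ} {p : SpaceTime n}
    (hspace : ∀ i, dirDeriv (spaceDir i) f p = 0) (htime : dirDeriv timeDir f p = 0) :
    fderiv ℝ f p = 0 := by
  refine ContinuousLinearMap.ext fun v => ?_
  have decomp : v = ∑ i, v.1 i • spaceDir i + v.2 • timeDir := by
    refine Prod.ext ?_ ?_
    · ext k
      simp [spaceDir, timeDir, Prod.fst_sum, Pi.single_apply]
    · simp [spaceDir, timeDir, Prod.snd_sum]
  rw [dirDeriv] at htime
  simp only [dirDeriv] at hspace
  rw [decomp, map_add, map_sum]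
  simp [hspace, htime]

lemma ancientCaloric_empty_le (n : ℕ) (a : ℝ) :
    ancientCaloric (∅ : Finset (Fin n)) a ≤ Submodule.span ℝ {(past n).indicator 1} := by
  rintro u ⟨hu, -, huS, hu₀⟩
  have space_zero (i : Fin n) : ∀ p ∈ past n, dirDeriv (spaceDir i) u p = 0 :=
    huS i (Finset.notMem_empty i)
  have space_space_zero (i : Fin n) {p : SpaceTime n} (hp : p ∈ past n) :
      dirDeriv (spaceDir i) (dirDeriv (spaceDir i) u) p = 0 :=
    dirDeriv_eq_zero_of_isOpen (isOpen_past n) (space_zero i) hp _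
  have time_zero : ∀ p ∈ past n, dirDeriv timeDir u p = 0 := fun p hp => by
    simpa [heatOp, space_space_zero _ hp] using hu.heatOp_eq_zero p hp
  have past_preconnected : IsPreconnected (past n) :=
    (convex_halfSpace_lt (LinearMap.snd ℝ _ ℝ).isLinear 0).isPreconnected
  obtain ⟨c, hc⟩ := (isOpen_past n).exists_is_const_of_fderiv_eq_zero past_preconnected
    (fun p hp => (hu.differentiableAt (isOpen_past n) hp).differentiableWithinAt)
    (fun p hp => fderiv_eq_zero_of_space_time (space_zero · p hp) (time_zero p hp))
  refine Submodule.mem_span_singleton.2 ⟨c, funext fun p => ?_⟩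
  by_cases hp : p ∈ past n
  · simp [indicator_of_mem hp, hc p hp]
  · simp [indicator_of_notMem hp, hu₀ p hp]

theorem rank_ancientCaloric_le (S : Finset (Fin n)) :
    ∀ (m : ℕ) (a : ℝ), a < m → Module.rank ℝ (ancientCaloric S a) ≤ m.multichoose S.card := by
  induction S using Finset.induction_on with
  | empty =>
    intro m a _
    simpa using (Submodule.rank_mono (ancientCaloric_empty_le n a)).trans (rank_span_le _)
  | insert i S hi ihS =>
    intro m
    induction m with
    | zero =>
      intro a ha
      rw [ancientCaloric_eq_bot_of_neg _ (by simpa using ha), rank_bot]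
      exact zero_le
    | succ m ihm =>
      intro a ha
      rw [Finset.card_insert_of_notMem hi, Nat.multichoose_succ_succ, Nat.cast_add,
        ← Finset.card_insert_of_notMem hi]
      refine (rank_ancientCaloric_insert_le S a i).trans
        (add_le_add (ihm (a - 1) ?_) (ihS (m + 1) a ha))
      push_cast at ha
      linarith

end Dimension

lemma multichoose_le_pow (m k : ℕ) : m.multichoose k ≤ m ^ k := by
  induction k generalizing m with
  | zero => simp
  | succ k ihk =>
    induction m with
    | zero => simp
    | succ m ihm =>
      calc (m + 1).multichoose (k + 1)
        _ = m.multichoose (k + 1) + (m + 1).multichoose k := Nat.multichoose_succ_succ m k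
        _ ≤ m ^ k * m + (m + 1) ^ k := add_le_add ihm (ihk (m + 1))
        _ ≤ (m + 1) ^ k * m + (m + 1) ^ k := by gcongr; exact m.le_succ
        _ = (m + 1) ^ (k + 1) := by ring

lemma multichoose_floor_add_one_le {d : ℝ} (hd : 1 ≤ d) (n : ℕ) :
    ((⌊d⌋₊ + 1).multichoose n : ℝ) ≤ 2 ^ n * d ^ n := by
  have floor_add_one_le : (⌊d⌋₊ : ℝ) + 1 ≤ 2 * d := by
    linarith [Nat.floor_le (zero_le_one.trans hd)]
  calc ((⌊d⌋₊ + 1).multichoose n : ℝ)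
    _ ≤ (⌊d⌋₊ + 1 : ℝ) ^ n := mod_cast multichoose_le_pow (⌊d⌋₊ + 1) n
    _ ≤ (2 * d) ^ n := by gcongr
    _ = 2 ^ n * d ^ n := mul_pow 2 d n

lemma isCaloricOn_past_of_deriv_eq_lap {n : ℕ} {u : SpaceTime n → ℝ}
    (hsmooth : ContDiffOn ℝ ∞ u (past n))
    (hcaloric : ∀ x t, t < 0 → deriv (fun s => u (x, s)) t = lap (fun y => u (y, t)) x) :
    IsCaloricOn u (past n) where
  contDiffOn := hsmooth
  heatOp_eq_zero := by
    rintro ⟨x, t⟩ ht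
    have hu₂ : ContDiffAt ℝ 2 u (x, t) :=
      (hsmooth.contDiffAt ((isOpen_past n).mem_nhds ht)).of_le (WithTop.coe_le_coe.2 le_top)
    rw [heatOp_eq_deriv_sub_lap hu₂, hcaloric x t ht, sub_self]

lemma indicator_mem_ancientCaloric {n : ℕ} {a : ℝ} {u : SpaceTime n → ℝ}
    (hu : IsCaloricOn u (past n)) (hua : HasParabolicGrowth a u) :
    (past n).indicator u ∈ ancientCaloric Finset.univ a :=
  ⟨hu.congr (isOpen_past n) eqOn_indicator, hua.congr eqOn_indicator,
    fun i hi => absurd (Finset.mem_univ i) hi, fun _ hp => indicator_of_notMem hp u⟩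

theorem dim_Pd_bound_euclidean_general {n : ℕ} {d : ℝ} (hd : 0 ≤ d) {ι : Type*} [Fintype ι]
    {u : ι → EuclideanSpace ℝ (Fin n) × ℝ → ℝ}
    (hsmooth : ∀ i, ContDiffOn ℝ ∞ (u i) {p | p.2 < 0})
    (hcaloric : ∀ i x t, t < 0 → deriv (fun s => u i (x, s)) t = lap (fun y => u i (y, t)) x)
    (hgrowth : ∀ i, ∃ C : ℝ, ∀ x t, t < 0 →
      |u i (x, t)| ≤ C * (1 + ‖x‖ ^ d + |t| ^ (d / 2)))
    (hindep : LinearIndependent ℝ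
      fun i => ({p : EuclideanSpace ℝ (Fin n) × ℝ | p.2 < 0}).domRestrict (u i)) :
    Fintype.card ι ≤ (⌊d⌋₊ + 1).multichoose n := by
  have hcal (i : ι) : IsCaloricOn (u i) (past n) :=
    isCaloricOn_past_of_deriv_eq_lap (hsmooth i) (hcaloric i)
  have hgrow (i : ι) : HasParabolicGrowth d (u i) :=
    let ⟨_, hC⟩ := hgrowth i
    hasParabolicGrowth_of_abs_le hd hC
  let v (i : ι) : ancientCaloric (Finset.univ : Finset (Fin n)) d :=
    ⟨_, indicator_mem_ancientCaloric (hcal i) (hgrow i)⟩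
  have v_indep : LinearIndependent ℝ v := by
    refine LinearIndependent.of_comp
      (LinearMap.funLeft ℝ ℝ ((↑) : past n → SpaceTime n) ∘ₗ Submodule.subtype _) ?_
    convert hindep using 2 with i
    ext p
    exact indicator_of_mem p.2 (u i)
  have rank_le : Module.rank ℝ (ancientCaloric (Finset.univ : Finset (Fin n)) d) ≤
      (⌊d⌋₊ + 1).multichoose n := by
    simpa using rank_ancientCaloric_le Finset.univ (⌊d⌋₊ + 1) d
      (mod_cast Nat.lt_floor_add_one d)
  have card_le := v_indep.cardinal_lift_le_rank.trans (Cardinal.lift_le.2 rank_le)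
  simpa using card_le

/-- There is a constant `C = C_n` depending only on `n` so that for every `d ≥ 1`,
any linearly independent family `u_1, …, u_ℓ` of smooth caloric functions on
`ℝⁿ × (−∞,0)` with polynomial growth of degree `d` satisfies `ℓ ≤ C_n d^n`. -/
theorem dim_Pd_bound_euclidean (n : ℕ) :
    ∃ C : ℝ, 0 < C ∧ ∀ d : ℝ, 1 ≤ d →
      ∀ (ℓ : ℕ) (u : Fin ℓ → (EuclideanSpace ℝ (Fin n) × ℝ → ℝ)),
        (∀ i, ContDiff ℝ (⊤ : ℕ∞) (u i)) →
        (∀ i (x : EuclideanSpace ℝ (Fin n)) (t : ℝ), t < 0 →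
          deriv (fun s => u i (x, s)) t = lap (fun y => u i (y, t)) x) →
        (∀ i, ∃ Ci : ℝ, ∀ (x : EuclideanSpace ℝ (Fin n)) (t : ℝ), t < 0 →
          |u i (x, t)| ≤ Ci * (1 + ‖x‖ ^ d + |t| ^ (d / 2))) →
        LinearIndependent ℝ
          (fun i => ({p : EuclideanSpace ℝ (Fin n) × ℝ | p.2 < 0}).restrict (u i)) →
        (ℓ : ℝ) ≤ C * d ^ n :=
  ⟨2 ^ n, by positivity, fun d hd ℓ u hsmooth hcaloric hgrowth hindep => by
    have card_le : ℓ ≤ (⌊d⌋₊ + 1).multichoose n := by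
      simpa using dim_Pd_bound_euclidean_general (zero_le_one.trans hd)
        (fun i => (hsmooth i).contDiffOn) hcaloric hgrowth hindep
    exact (Nat.cast_le.2 card_le).trans (multichoose_floor_add_one_le hd n)⟩
end

section
/- Fix t < 0. If u : ℝⁿ → ℝ is C¹ with ∫_{ℝⁿ} (1 + ‖x‖²) u(x)² e^{‖x‖²/(4t)} dx < ∞ and ∫_{ℝⁿ} ‖∇u‖² e^{‖x‖²/(4t)} dx < ∞, then (1/(−t)) · ∫_{ℝⁿ} ‖x‖² u² e^{‖x‖²/(4t)} dx ≤ 4n · ∫_{ℝⁿ} u² e^{‖x‖²/(4t)} dx − 16t · ∫_{ℝⁿ} ‖∇u‖² e^{‖x‖²/(4t)} dx. (Euclidean-space case of the paper's Lemma 4.4, the localization inequality on an ancient mean curvature flow; for the static flow M_t = ℝⁿ the quantity φ = H + x^⊥/(2t) vanishes identically.) -/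
open MeasureTheory Real

/-!
Put `f = u² e^{‖x‖²/(4t)}`. The divergence of the vector field `f(x) x` is `n f(x) + Df(x) x`, so
`∫ Df(x) x = -n ∫ f`. Here `Df(x) x = (2 u Du(x) x + ‖x‖² u² / (2t)) e^{‖x‖²/(4t)}`, and completing
the square in the cross term gives
`(1/(-t)) ‖x‖² f + 4 Df(x) x ≤ -16 t ‖Du‖² e^{‖x‖²/(4t)}`, which only has to be integrated.
-/

theorem clm_apply_eq_sum_coord_smul {ι E F : Type*} [Fintype ι] [NormedAddCommGroup E]
    [NormedSpace ℝ E] [FiniteDimensional ℝ E] [NormedAddCommGroup F] [NormedSpace ℝ F]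
    (b : Module.Basis ι ℝ E) (A : E →L[ℝ] F) (x : E) :
    A x = ∑ i, (b.coord i).toContinuousLinearMap x • A (b i) := by
  conv_lhs => rw [← b.sum_repr x, map_sum]
  simp

section EulerField

variable {E F : Type*} [NormedAddCommGroup E] [MeasurableSpace E] [BorelSpace E]
  [NormedAddCommGroup F] [NormedSpace ℝ F] {μ : Measure E}

theorem integrable_norm_pow_smul_of_one_add_norm_sq_smul {g : E → F}
    (hg : Integrable (fun x => (1 + ‖x‖ ^ 2) • g x) μ) {k : ℕ} (hk : k ≤ 2) :
    Integrable (fun x => ‖x‖ ^ k • g x) μ := by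
  have one_add_pos (x : E) : 0 < 1 + ‖x‖ ^ 2 := by positivity
  have pow_le (x : E) : ‖x‖ ^ k ≤ 1 + ‖x‖ ^ 2 := by
    interval_cases k <;> nlinarith [sq_nonneg (‖x‖ - 1)]
  have ratio_measurable : Measurable fun x : E => ‖x‖ ^ k / (1 + ‖x‖ ^ 2) := by fun_prop
  have ratio_le (x : E) : ‖‖x‖ ^ k / (1 + ‖x‖ ^ 2)‖ ≤ 1 := by
    rw [norm_of_nonneg (by positivity)]
    exact div_le_one_of_le₀ (pow_le x) (one_add_pos x).le
  refine (hg.bdd_smul 1 ratio_measurable.aestronglyMeasurable (.of_forall ratio_le)).congr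
    (.of_forall fun x => ?_)
  simp only [Pi.smul_apply', smul_smul]
  rw [div_mul_cancel₀ _ (one_add_pos x).ne']

variable [NormedSpace ℝ E]

theorem integrable_clm_smul_of_norm_smul {g : E → F}
    (hg : Integrable (fun x => ‖x‖ • g x) μ) (L : E →L[ℝ] ℝ) :
    Integrable (fun x => L x • g x) μ := by
  have ratio_measurable : Measurable fun x : E => L x / ‖x‖ := by fun_prop
  have ratio_le (x : E) : ‖L x / ‖x‖‖ ≤ ‖L‖ := by
    rw [norm_div, norm_norm]
    exact L.ratio_le_opNorm x
  refine (hg.bdd_smul ‖L‖ ratio_measurable.aestronglyMeasurable (.of_forall ratio_le)).congr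
    (.of_forall fun x => ?_)
  obtain rfl | hx := eq_or_ne x 0
  · simp
  · simp only [Pi.smul_apply', smul_smul]
    rw [div_mul_cancel₀ _ (norm_ne_zero_iff.mpr hx)]

variable [FiniteDimensional ℝ E]

theorem integrable_clm_apply_self_of_norm_smul {A : E → E →L[ℝ] F}
    (hA : Integrable (fun x => ‖x‖ • A x) μ) : Integrable (fun x => A x x) μ := by
  simp_rw [fun x => clm_apply_eq_sum_coord_smul (Module.finBasis ℝ E) (A x) x]
  exact integrable_finsetSum _ fun i _ =>
    (integrable_clm_smul_of_norm_smul hA _).apply_continuousLinearMap _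

variable [μ.IsAddHaarMeasure] {f : E → F}

theorem integral_clm_smul_fderiv (hf : Differentiable ℝ f) (hint : Integrable f μ)
    (hxf : Integrable (fun x => ‖x‖ • f x) μ)
    (hxf' : Integrable (fun x => ‖x‖ • fderiv ℝ f x) μ) (L : E →L[ℝ] ℝ) (v : E) :
    ∫ x, L x • fderiv ℝ f x v ∂μ = -(L v • ∫ x, f x ∂μ) := by
  have parts := integral_smul_fderiv_eq_neg_fderiv_smul_of_integrable (μ := μ) (f := L) (v := v)
    (by simp only [L.fderiv]; exact hint.smul (L v))
    ((integrable_clm_smul_of_norm_smul hxf' L).apply_continuousLinearMap v)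
    (integrable_clm_smul_of_norm_smul hxf L)
    (fun _ _ => L.differentiableAt) (fun x _ => hf x)
  simpa only [L.fderiv, integral_smul] using parts

theorem integral_fderiv_apply_self (hf : Differentiable ℝ f) (hint : Integrable f μ)
    (hxf : Integrable (fun x => ‖x‖ • f x) μ)
    (hxf' : Integrable (fun x => ‖x‖ • fderiv ℝ f x) μ) :
    ∫ x, fderiv ℝ f x x ∂μ = -(Module.finrank ℝ E • ∫ x, f x ∂μ) := by
  let b := Module.finBasis ℝ E
  let coord i : E →L[ℝ] ℝ := (b.coord i).toContinuousLinearMap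
  have coord_basis i : coord i (b i) = 1 := by simp [coord]
  calc ∫ x, fderiv ℝ f x x ∂μ
      = ∑ i, ∫ x, coord i x • fderiv ℝ f x (b i) ∂μ := by
        simp_rw [fun x => clm_apply_eq_sum_coord_smul b (fderiv ℝ f x) x]
        exact integral_finsetSum _ fun i _ =>
          (integrable_clm_smul_of_norm_smul hxf' (coord i)).apply_continuousLinearMap (b i)
    _ = ∑ _i : Fin (Module.finrank ℝ E), -∫ x, f x ∂μ := by
        simp_rw [integral_clm_smul_fderiv hf hint hxf hxf', coord_basis, one_smul]
    _ = -(Module.finrank ℝ E • ∫ x, f x ∂μ) := by simp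

end EulerField

section GaussianWeight

variable {E : Type*} [NormedAddCommGroup E] [InnerProductSpace ℝ E] {u : E → ℝ} {t : ℝ}

theorem hasFDerivAt_exp_norm_sq_div (t : ℝ) (x : E) :
    HasFDerivAt (fun y : E => exp (‖y‖ ^ 2 / (4 * t)))
      ((exp (‖x‖ ^ 2 / (4 * t)) / (2 * t)) • innerSL ℝ x) x := by
  have exponent := (hasStrictFDerivAt_norm_sq x).hasFDerivAt.mul_const (4 * t)⁻¹
  simp only [div_eq_mul_inv]
  refine exponent.exp.congr_fderiv ?_
  ext v
  simp only [smul_apply, coe_innerSL_apply, nsmul_eq_mul, Nat.cast_ofNat,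
    smul_eq_mul]
  ring

theorem hasFDerivAt_sq_mul_exp {x : E} (hu : DifferentiableAt ℝ u x) (t : ℝ) :
    HasFDerivAt (fun y => u y ^ 2 * exp (‖y‖ ^ 2 / (4 * t)))
      (exp (‖x‖ ^ 2 / (4 * t)) •
        ((2 * u x) • fderiv ℝ u x + (u x ^ 2 / (2 * t)) • innerSL ℝ x)) x := by
  refine ((hu.hasFDerivAt.pow 2).fun_mul (hasFDerivAt_exp_norm_sq_div t x)).congr_fderiv ?_
  ext v
  simp only [pow_one, nsmul_eq_mul, Nat.cast_ofNat, add_apply, smul_apply,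
    coe_innerSL_apply, smul_eq_mul, Nat.add_one_sub_one]
  ring

theorem norm_mul_norm_fderiv_sq_mul_exp_le {x : E} (hu : DifferentiableAt ℝ u x) (t : ℝ) :
    ‖x‖ * ‖fderiv ℝ (fun y => u y ^ 2 * exp (‖y‖ ^ 2 / (4 * t))) x‖ ≤
      (1 + |(2 * t)⁻¹|) * (‖x‖ ^ 2 * u x ^ 2 * exp (‖x‖ ^ 2 / (4 * t))) +
        ‖fderiv ℝ u x‖ ^ 2 * exp (‖x‖ ^ 2 / (4 * t)) := by
  rw [(hasFDerivAt_sq_mul_exp hu t).fderiv, norm_smul, norm_of_nonneg (exp_nonneg _)]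
  have triangle : ‖(2 * u x) • fderiv ℝ u x + (u x ^ 2 / (2 * t)) • innerSL ℝ x‖ ≤
      2 * |u x| * ‖fderiv ℝ u x‖ + u x ^ 2 * |(2 * t)⁻¹| * ‖x‖ := by
    refine (norm_add_le _ _).trans_eq ?_
    simp [norm_smul, div_eq_mul_inv]
  have cross_term : 2 * (‖x‖ * |u x|) * ‖fderiv ℝ u x‖ ≤
      ‖x‖ ^ 2 * u x ^ 2 + ‖fderiv ℝ u x‖ ^ 2 := by
    simpa only [mul_pow, sq_abs] using two_mul_le_add_sq (‖x‖ * |u x|) ‖fderiv ℝ u x‖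
  calc ‖x‖ * (exp (‖x‖ ^ 2 / (4 * t)) *
        ‖(2 * u x) • fderiv ℝ u x + (u x ^ 2 / (2 * t)) • innerSL ℝ x‖)
      ≤ ‖x‖ * (exp (‖x‖ ^ 2 / (4 * t)) *
          (2 * |u x| * ‖fderiv ℝ u x‖ + u x ^ 2 * |(2 * t)⁻¹| * ‖x‖)) := by gcongr
    _ = (2 * (‖x‖ * |u x|) * ‖fderiv ℝ u x‖ + |(2 * t)⁻¹| * (‖x‖ ^ 2 * u x ^ 2)) *
          exp (‖x‖ ^ 2 / (4 * t)) := by ring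
    _ ≤ (‖x‖ ^ 2 * u x ^ 2 + ‖fderiv ℝ u x‖ ^ 2 + |(2 * t)⁻¹| * (‖x‖ ^ 2 * u x ^ 2)) *
          exp (‖x‖ ^ 2 / (4 * t)) := by gcongr
    _ = _ := by ring

theorem norm_sq_mul_add_fderiv_apply_self_le {x : E} (hu : DifferentiableAt ℝ u x) (ht : t < 0) :
    1 / (-t) * (‖x‖ ^ 2 * u x ^ 2 * exp (‖x‖ ^ 2 / (4 * t))) +
        4 * fderiv ℝ (fun y => u y ^ 2 * exp (‖y‖ ^ 2 / (4 * t))) x x ≤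
      -16 * t * (‖fderiv ℝ u x‖ ^ 2 * exp (‖x‖ ^ 2 / (4 * t))) := by
  have fderiv_apply_self : fderiv ℝ (fun y => u y ^ 2 * exp (‖y‖ ^ 2 / (4 * t))) x x =
      exp (‖x‖ ^ 2 / (4 * t)) * (2 * u x * fderiv ℝ u x x + u x ^ 2 / (2 * t) * ‖x‖ ^ 2) := by
    simp [(hasFDerivAt_sq_mul_exp hu t).fderiv, mul_add]
  have radial_le : u x * fderiv ℝ u x x ≤ ‖x‖ * |u x| * ‖fderiv ℝ u x‖ :=
    calc u x * fderiv ℝ u x x ≤ |u x| * |fderiv ℝ u x x| := by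
          rw [← abs_mul]; exact le_abs_self _
      _ ≤ |u x| * (‖fderiv ℝ u x‖ * ‖x‖) := by
          gcongr; exact (fderiv ℝ u x).le_opNorm x
      _ = ‖x‖ * |u x| * ‖fderiv ℝ u x‖ := by ring
  have cross_term : 8 * (u x * fderiv ℝ u x x) ≤
      1 / (-t) * (‖x‖ ^ 2 * u x ^ 2) - 16 * t * ‖fderiv ℝ u x‖ ^ 2 := by
    have young := two_mul_le_add_mul_sq (a := ‖x‖ * |u x|) (b := 4 * ‖fderiv ℝ u x‖)
      (inv_pos.mpr (neg_pos.mpr ht))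
    rw [inv_inv, mul_pow, sq_abs] at young
    rw [one_div]
    linarith
  have ht0 : t ≠ 0 := ht.ne
  calc _ = (8 * (u x * fderiv ℝ u x x) - 1 / (-t) * (‖x‖ ^ 2 * u x ^ 2)) *
          exp (‖x‖ ^ 2 / (4 * t)) := by rw [fderiv_apply_self]; field_simp; ring
    _ ≤ -16 * t * ‖fderiv ℝ u x‖ ^ 2 * exp (‖x‖ ^ 2 / (4 * t)) := by gcongr; linarith
    _ = _ := mul_assoc _ _ _

variable [FiniteDimensional ℝ E] [MeasurableSpace E] [BorelSpace E] {μ : Measure E}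

theorem integrable_norm_smul_fderiv_sq_mul_exp (hu : Differentiable ℝ u)
    (hxu : Integrable (fun x => ‖x‖ ^ 2 * u x ^ 2 * exp (‖x‖ ^ 2 / (4 * t))) μ)
    (hu' : Integrable (fun x => ‖fderiv ℝ u x‖ ^ 2 * exp (‖x‖ ^ 2 / (4 * t))) μ) :
    Integrable (fun x => ‖x‖ • fderiv ℝ (fun y => u y ^ 2 * exp (‖y‖ ^ 2 / (4 * t))) x) μ := by
  refine ((hxu.const_mul (1 + |(2 * t)⁻¹|)).add hu').mono'
    (continuous_norm.aestronglyMeasurable.smul (measurable_fderiv ℝ _).aestronglyMeasurable)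
    (.of_forall fun x => ?_)
  rw [norm_smul, norm_norm]
  exact norm_mul_norm_fderiv_sq_mul_exp_le (hu x) t

end GaussianWeight

theorem localization_ancient_flow_euclidean_general {E : Type*} [NormedAddCommGroup E]
    [InnerProductSpace ℝ E] [FiniteDimensional ℝ E] [MeasurableSpace E] [BorelSpace E]
    {μ : Measure E} [μ.IsAddHaarMeasure] {t : ℝ} (ht : t < 0) {u : E → ℝ}
    (hu : Differentiable ℝ u)
    (h1 : Integrable (fun x => (1 + ‖x‖ ^ 2) * u x ^ 2 * exp (‖x‖ ^ 2 / (4 * t))) μ)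
    (h2 : Integrable (fun x => ‖gradient u x‖ ^ 2 * exp (‖x‖ ^ 2 / (4 * t))) μ) :
    (1 / (-t)) * ∫ x, ‖x‖ ^ 2 * u x ^ 2 * exp (‖x‖ ^ 2 / (4 * t)) ∂μ ≤
      4 * Module.finrank ℝ E * (∫ x, u x ^ 2 * exp (‖x‖ ^ 2 / (4 * t)) ∂μ) -
        16 * t * ∫ x, ‖gradient u x‖ ^ 2 * exp (‖x‖ ^ 2 / (4 * t)) ∂μ := by
  have norm_gradient (x : E) : ‖gradient u x‖ = ‖fderiv ℝ u x‖ := by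
    rw [← toDual_gradient, LinearIsometryEquiv.norm_map]
  simp only [norm_gradient] at h2 ⊢
  set f : E → ℝ := fun x => u x ^ 2 * exp (‖x‖ ^ 2 / (4 * t)) with f_def
  have hf : Differentiable ℝ f := fun x => (hasFDerivAt_sq_mul_exp (hu x) t).differentiableAt
  have moment_integrable {k : ℕ} (hk : k ≤ 2) : Integrable (fun x => ‖x‖ ^ k • f x) μ :=
    integrable_norm_pow_smul_of_one_add_norm_sq_smul
      (by simpa only [f_def, smul_eq_mul, mul_assoc] using h1) hk
  have hint : Integrable f μ := by simpa using moment_integrable zero_le_two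
  have hxf : Integrable (fun x => ‖x‖ • f x) μ := by simpa using moment_integrable one_le_two
  have hxxf : Integrable (fun x => ‖x‖ ^ 2 * u x ^ 2 * exp (‖x‖ ^ 2 / (4 * t))) μ := by
    simpa only [f_def, smul_eq_mul, mul_assoc] using moment_integrable le_rfl
  have hxf' := integrable_norm_smul_fderiv_sq_mul_exp hu hxxf h2
  have radial_integrable : Integrable (fun x => fderiv ℝ f x x) μ :=
    integrable_clm_apply_self_of_norm_smul hxf'
  have integrated := integral_mono ((hxxf.const_mul (1 / -t)).add (radial_integrable.const_mul 4))
    (h2.const_mul (-16 * t)) fun x => norm_sq_mul_add_fderiv_apply_self_le (hu x) ht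
  simp only [Pi.add_apply] at integrated
  rw [integral_add (hxxf.const_mul _) (radial_integrable.const_mul _), integral_const_mul,
    integral_const_mul, integral_const_mul, integral_fderiv_apply_self hf hint hxf hxf',
    nsmul_eq_mul] at integrated
  linarith

/-- Euclidean-space case of the localization inequality on an ancient mean curvature flow
(for the static flow `M_t = ℝⁿ`, where `φ ≡ 0`): for fixed `t < 0`,
`(1/(−t)) ∫‖x‖²u² e^{‖x‖²/4t} ≤ 4n ∫u² e^{‖x‖²/4t} − 16t ∫‖∇u‖² e^{‖x‖²/4t}`. -/
theorem localization_ancient_flow_euclidean (n : ℕ) (hn : 1 ≤ n) (t : ℝ) (ht : t < 0)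
    (u : EuclideanSpace ℝ (Fin n) → ℝ) (hu : ContDiff ℝ 1 u)
    (h1 : Integrable (fun x => (1 + ‖x‖ ^ 2) * (u x) ^ 2 * exp (‖x‖ ^ 2 / (4 * t))))
    (h2 : Integrable (fun x => ‖gradient u x‖ ^ 2 * exp (‖x‖ ^ 2 / (4 * t)))) :
    (1 / (-t)) * ∫ x, ‖x‖ ^ 2 * (u x) ^ 2 * exp (‖x‖ ^ 2 / (4 * t)) ≤
      4 * n * (∫ x, (u x) ^ 2 * exp (‖x‖ ^ 2 / (4 * t))) -
        16 * t * ∫ x, ‖gradient u x‖ ^ 2 * exp (‖x‖ ^ 2 / (4 * t)) := by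
  simpa only [finrank_euclideanSpace_fin] using
    localization_ancient_flow_euclidean_general ht (hu.differentiable one_ne_zero) h1 h2
end

section
/- Let u : ℝⁿ × (−∞,0) → ℝ be smooth and caloric (∂_t u = Δ_x u pointwise), and suppose there exist constants C and d ≥ 1 such that |u(x,t)| + ‖∇_x u(x,t)‖ + ‖∇_x² u(x,t)‖ ≤ C(1 + ‖x‖^d + |t|^{d/2}) for all x and t < 0. Then I_u is differentiable on (−∞,0) with I_u′(t) = −2(−4πt)^{−n/2} ∫_{ℝⁿ} ‖∇_x u(x,t)‖² e^{‖x‖²/(4t)} dx ≤ 0; in particular I_u is nonincreasing on (−∞,0). (Euclidean-space case of the derivative formula in the paper's Lemma 7.1, where φ = H + x^⊥/(2t) vanishes identically.) -/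
open MeasureTheory Real

/-!
For `t < 0` the backward heat kernel `ρ(x, t) = (-4πt) ^ (-n / 2) * exp (‖x‖² / 4t)` satisfies
`∂ₜρ = -Δρ`. Differentiating under the integral sign and integrating by parts twice in space, where
the Gaussian decay of `ρ` absorbs all polynomial growth, gives
`d/dt ∫ w ρ = ∫ (∂ₜw - Δw) ρ`. For caloric `u` the choice `w = u²` yields the formula, since
`(∂ₜ - Δ) u² = -2 ‖∇u‖²`.
-/

open Asymptotics Filter InnerProductSpace Module Topology
open scoped Laplacian

section PolyGrowth

variable {α β E F G : Type*} [NormedAddCommGroup E] [NormedAddCommGroup F] [NormedAddCommGroup G]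
  {l : Filter α} {φ : α → E}

/-- Along the filter `l`, the function `f` grows at most polynomially in `‖φ‖`. The choice
`l = ⊤`, `φ = id` is polynomial growth on a normed space; `l = 𝓝 t ×ˢ ⊤`, `φ = Prod.snd` is
polynomial growth in space, locally uniformly in time. -/
def PolyGrowth (l : Filter α) (φ : α → E) (f : α → F) : Prop :=
  ∃ N : ℕ, f =O[l] fun a => (1 + ‖φ a‖) ^ N

namespace PolyGrowth

lemma of_eventually_norm_le {f : α → F} {g : α → G} (hg : PolyGrowth l φ g)
    (hfg : ∀ᶠ a in l, ‖f a‖ ≤ ‖g a‖) : PolyGrowth l φ f :=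
  let ⟨N, hN⟩ := hg
  ⟨N, (IsBigO.of_bound' hfg).trans hN⟩

lemma of_norm_le {f : α → F} {g : α → G} (hg : PolyGrowth l φ g) (hfg : ∀ a, ‖f a‖ ≤ ‖g a‖) :
    PolyGrowth l φ f :=
  hg.of_eventually_norm_le (.of_forall hfg)

lemma of_tendsto {f : α → F} {c : F} (hf : Tendsto f l (𝓝 c)) : PolyGrowth l φ f :=
  ⟨0, by simpa only [pow_zero] using hf.isBigO_one ℝ⟩

lemma const (c : F) : PolyGrowth l φ fun _ => c :=
  of_tendsto tendsto_const_nhds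

variable (l φ) in
lemma self : PolyGrowth l φ φ :=
  ⟨1, IsBigO.of_norm_le fun a => by rw [pow_one]; linarith⟩

lemma mul {f g : α → ℝ} (hf : PolyGrowth l φ f) (hg : PolyGrowth l φ g) :
    PolyGrowth l φ fun a => f a * g a := by
  obtain ⟨N, hN⟩ := hf
  obtain ⟨M, hM⟩ := hg
  exact ⟨N + M, by simpa only [pow_add] using hN.mul hM⟩

lemma add {f g : α → F} (hf : PolyGrowth l φ f) (hg : PolyGrowth l φ g) :
    PolyGrowth l φ fun a => f a + g a := by
  obtain ⟨N, hN⟩ := hf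
  obtain ⟨M, hM⟩ := hg
  have raise {k : ℕ} (hk : k ≤ N + M) :
      (fun a => (1 + ‖φ a‖) ^ k) =O[l] fun a => (1 + ‖φ a‖) ^ (N + M) :=
    IsBigO.of_norm_le fun a => by
      rw [norm_of_nonneg (by positivity)]
      exact pow_le_pow_right₀ (le_add_of_nonneg_right (norm_nonneg _)) hk
  exact ⟨N + M, (hN.trans (raise (by lia))).add (hM.trans (raise (by lia)))⟩

lemma neg {f : α → F} (hf : PolyGrowth l φ f) : PolyGrowth l φ fun a => -f a :=
  hf.of_norm_le fun a => (norm_neg (f a)).le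

lemma sub {f g : α → F} (hf : PolyGrowth l φ f) (hg : PolyGrowth l φ g) :
    PolyGrowth l φ fun a => f a - g a := by
  simpa only [sub_eq_add_neg] using hf.add hg.neg

lemma norm {f : α → F} (hf : PolyGrowth l φ f) : PolyGrowth l φ fun a => ‖f a‖ :=
  hf.of_norm_le fun a => (norm_norm (f a)).le

lemma sum {ι : Type*} {s : Finset ι} {f : ι → α → F} (hf : ∀ i ∈ s, PolyGrowth l φ (f i)) :
    PolyGrowth l φ fun a => ∑ i ∈ s, f i a := by
  classical
  induction s using Finset.induction_on with
  | empty => simpa only [Finset.sum_empty] using const 0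
  | insert i s hi ih =>
    simp only [Finset.sum_insert hi]
    exact (hf i (s.mem_insert_self i)).add (ih fun j hj => hf j (Finset.mem_insert_of_mem hj))

lemma mul_norm_sq {f : α → ℝ} (hf : PolyGrowth l φ f) :
    PolyGrowth l φ fun a => f a * ‖φ a‖ ^ 2 := by
  simpa only [sq] using hf.mul ((self l φ).norm.mul (self l φ).norm)

lemma comp_tendsto {f : α → F} (hf : PolyGrowth l φ f) {l' : Filter β} {k : β → α}
    (hk : Tendsto k l' l) : PolyGrowth l' (φ ∘ k) (f ∘ k) :=
  let ⟨N, hN⟩ := hf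
  ⟨N, hN.comp_tendsto hk⟩

lemma slice {T : Type*} [TopologicalSpace T] {t : T} {w : T → E → F}
    (hw : PolyGrowth (𝓝 t ×ˢ ⊤) Prod.snd fun p => w p.1 p.2) : PolyGrowth ⊤ id (w t) :=
  hw.comp_tendsto (k := fun x => (t, x)) (tendsto_const_nhds.prodMk tendsto_id)

end PolyGrowth

end PolyGrowth

section TemperateUpTo

variable {E F : Type*} [NormedAddCommGroup E] [NormedSpace ℝ E]
  [NormedAddCommGroup F] [NormedSpace ℝ F] {m k : ℕ}

/-- Temperate growth to finite order: `f` is `C^m` and its derivatives of order at most `m` grow at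
most polynomially. This is the finite-order version of `Function.HasTemperateGrowth`. -/
structure TemperateUpTo (m : ℕ) (f : E → F) : Prop where
  contDiff : ContDiff ℝ m f
  polyGrowth_iteratedFDeriv : ∀ k ≤ m, PolyGrowth ⊤ id (iteratedFDeriv ℝ k f)

lemma temperateUpTo_of_hasTemperateGrowth {f : E → F} (hf : f.HasTemperateGrowth) (m : ℕ) :
    TemperateUpTo m f where
  contDiff := hf.1.of_le (mod_cast le_top)
  polyGrowth_iteratedFDeriv k _ := hf.isBigO k

namespace TemperateUpTo

lemma of_le {f : E → F} (hf : TemperateUpTo m f) (hkm : k ≤ m) : TemperateUpTo k f where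
  contDiff := hf.contDiff.of_le (mod_cast hkm)
  polyGrowth_iteratedFDeriv j hj := hf.polyGrowth_iteratedFDeriv j (hj.trans hkm)

lemma polyGrowth {f : E → F} (hf : TemperateUpTo m f) : PolyGrowth ⊤ id f :=
  (hf.polyGrowth_iteratedFDeriv 0 m.zero_le).of_norm_le fun _ => norm_iteratedFDeriv_zero.ge

lemma fderiv_apply {f : E → F} (hf : TemperateUpTo (m + 1) f) (e : E) :
    TemperateUpTo m fun x => fderiv ℝ f x e where
  contDiff := (hf.contDiff.fderiv_right le_rfl).clm_apply contDiff_const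
  polyGrowth_iteratedFDeriv k hk := by
    have hf' : ContDiff ℝ m (fderiv ℝ f) := hf.contDiff.fderiv_right le_rfl
    refine ((PolyGrowth.const ‖e‖).mul
      (hf.polyGrowth_iteratedFDeriv (k + 1) (by lia)).norm).of_norm_le fun x => ?_
    calc ‖iteratedFDeriv ℝ k (fun y => fderiv ℝ f y e) x‖
        ≤ ‖e‖ * ‖iteratedFDeriv ℝ k (fderiv ℝ f) x‖ :=
          norm_iteratedFDeriv_clm_apply_const hf'.contDiffAt (mod_cast hk)
      _ = ‖e‖ * ‖iteratedFDeriv ℝ (k + 1) f x‖ := by rw [norm_iteratedFDeriv_fderiv]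
      _ ≤ ‖‖e‖ * ‖iteratedFDeriv ℝ (k + 1) f x‖‖ := le_norm_self _

lemma mul {f g : E → ℝ} (hf : TemperateUpTo m f) (hg : TemperateUpTo m g) :
    TemperateUpTo m fun x => f x * g x where
  contDiff := hf.contDiff.mul hg.contDiff
  polyGrowth_iteratedFDeriv k hk := by
    have leibniz : PolyGrowth ⊤ id fun x => ∑ i ∈ Finset.range (k + 1),
        (k.choose i : ℝ) * ‖iteratedFDeriv ℝ i f x‖ * ‖iteratedFDeriv ℝ (k - i) g x‖ :=
      PolyGrowth.sum fun i hi =>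
        ((PolyGrowth.const _).mul (hf.polyGrowth_iteratedFDeriv i (by grind)).norm).mul
          (hg.polyGrowth_iteratedFDeriv (k - i) (by lia)).norm
    exact leibniz.of_norm_le fun x =>
      (norm_iteratedFDeriv_mul_le hf.contDiff hg.contDiff x (mod_cast hk)).trans (le_norm_self _)

end TemperateUpTo

end TemperateUpTo

section Laplacian

lemma iteratedFDeriv_two_apply_eq_fderiv_fderiv_apply {E F : Type*} [NormedAddCommGroup E]
    [NormedSpace ℝ E] [NormedAddCommGroup F] [NormedSpace ℝ F] {f : E → F} (hf : ContDiff ℝ 2 f)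
    (x e e' : E) : iteratedFDeriv ℝ 2 f x ![e, e'] = fderiv ℝ (fun y => fderiv ℝ f y e') x e := by
  have hdiff : DifferentiableAt ℝ (fderiv ℝ f) x :=
    (hf.fderiv_right (m := 1) (by norm_num)).differentiable (by norm_num) x
  rw [iteratedFDeriv_two_apply, fderiv_clm_apply hdiff (differentiableAt_const e')]
  simp

lemma iteratedFDeriv_two_sq_apply {E : Type*} [NormedAddCommGroup E] [NormedSpace ℝ E]
    {f : E → ℝ} (hf : ContDiff ℝ 2 f) (x e e' : E) :
    iteratedFDeriv ℝ 2 (fun y => f y ^ 2) x ![e, e']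
      = 2 * f x * iteratedFDeriv ℝ 2 f x ![e, e'] + 2 * (fderiv ℝ f x e * fderiv ℝ f x e') := by
  have hf_diff : Differentiable ℝ f := hf.differentiable (by norm_num)
  have hf'_diff : Differentiable ℝ fun y => fderiv ℝ f y e' :=
    ((hf.fderiv_right (m := 1) (by norm_num)).clm_apply contDiff_const).differentiable
      (by norm_num)
  have fderiv_sq : (fun y => fderiv ℝ (fun z => f z ^ 2) y e')
      = fun y => 2 * f y * fderiv ℝ f y e' := by
    ext y
    rw [fderiv_fun_pow 2 (hf_diff y)]
    simp
  rw [iteratedFDeriv_two_apply_eq_fderiv_fderiv_apply (hf.pow 2),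
    iteratedFDeriv_two_apply_eq_fderiv_fderiv_apply hf, fderiv_sq,
    fderiv_fun_mul ((hf_diff x).const_mul 2) (hf'_diff x), fderiv_const_mul (hf_diff x)]
  simp only [add_apply, smul_apply, smul_eq_mul]
  ring

variable {E : Type*} [NormedAddCommGroup E] [InnerProductSpace ℝ E] [FiniteDimensional ℝ E]
  {f : E → ℝ}

lemma laplacian_sq (hf : ContDiff ℝ 2 f) (x : E) :
    Δ (fun y => f y ^ 2) x = 2 * f x * Δ f x + 2 * ‖fderiv ℝ f x‖ ^ 2 := by
  simp only [laplacian_eq_iteratedFDeriv_stdOrthonormalBasis, iteratedFDeriv_two_sq_apply hf,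
    ← sq, (stdOrthonormalBasis ℝ E).norm_dual, Finset.sum_add_distrib, Finset.mul_sum]

lemma continuous_laplacian (hf : ContDiff ℝ 2 f) : Continuous (Δ f) := by
  rw [laplacian_eq_iteratedFDeriv_stdOrthonormalBasis]
  exact continuous_finsetSum _ fun i _ =>
    (continuous_eval_const _).comp (hf.continuous_iteratedFDeriv le_rfl)

lemma norm_laplacian_le (f : E → ℝ) (x : E) :
    ‖Δ f x‖ ≤ finrank ℝ E * ‖iteratedFDeriv ℝ 2 f x‖ := by
  rw [laplacian_eq_iteratedFDeriv_stdOrthonormalBasis]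
  calc ‖∑ i, iteratedFDeriv ℝ 2 f x ![stdOrthonormalBasis ℝ E i, stdOrthonormalBasis ℝ E i]‖
      ≤ ∑ _i : Fin (finrank ℝ E), ‖iteratedFDeriv ℝ 2 f x‖ := norm_sum_le_of_le _ fun i _ => by
        simpa using (iteratedFDeriv ℝ 2 f x).le_opNorm
          ![stdOrthonormalBasis ℝ E i, stdOrthonormalBasis ℝ E i]
    _ = finrank ℝ E * ‖iteratedFDeriv ℝ 2 f x‖ := by simp

lemma PolyGrowth.laplacian {α : Type*} {l : Filter α} {φ : α → E} {v : α → E → ℝ}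
    (hv : PolyGrowth l φ fun a => iteratedFDeriv ℝ 2 (v a) (φ a)) :
    PolyGrowth l φ fun a => Δ (v a) (φ a) :=
  ((PolyGrowth.const (finrank ℝ E : ℝ)).mul hv.norm).of_norm_le fun a =>
    (norm_laplacian_le (v a) (φ a)).trans (le_norm_self _)

lemma lap_eq_laplacian {n : ℕ} {v : EuclideanSpace ℝ (Fin n) → ℝ} (hv : ContDiff ℝ 2 v) :
    lap v = Δ v := by
  ext x
  simp only [lap, laplacian_eq_iteratedFDeriv_orthonormalBasis v (EuclideanSpace.basisFun _ ℝ),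
    iteratedFDeriv_two_apply_eq_fderiv_fderiv_apply hv, EuclideanSpace.basisFun_apply]

end Laplacian

section HeatWeight

variable {E : Type*} [NormedAddCommGroup E] {t : ℝ}

/-- The unnormalised backward heat kernel `exp (‖x‖² / 4t)`. It is a Gaussian for `t < 0`; at
`t = 0` division by zero makes it the constant `1`. -/
noncomputable def heatWeight (t : ℝ) (x : E) : ℝ :=
  exp (‖x‖ ^ 2 / (4 * t))

lemma heatWeight_pos (t : ℝ) (x : E) : 0 < heatWeight t x :=
  exp_pos _

lemma continuous_heatWeight (t : ℝ) : Continuous (heatWeight t : E → ℝ) := by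
  unfold heatWeight
  fun_prop

lemma heatWeight_le_heatWeight {r s : ℝ} (hs : s < 0) (hsr : s ≤ r) (hr : r < 0) (x : E) :
    heatWeight r x ≤ heatWeight s x := by
  refine exp_le_exp.2 ?_
  rw [div_eq_mul_inv, div_eq_mul_inv]
  refine mul_le_mul_of_nonneg_left ?_ (sq_nonneg _)
  exact (inv_le_inv_of_neg (by linarith) (by linarith)).2 (by linarith)

lemma hasDerivAt_heatWeight (ht : t ≠ 0) (x : E) :
    HasDerivAt (fun s => heatWeight s x) (-(‖x‖ ^ 2 / (4 * t ^ 2)) * heatWeight t x) t := by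
  have hexponent : HasDerivAt (fun s => ‖x‖ ^ 2 / (4 * s)) (-(‖x‖ ^ 2 / (4 * t ^ 2))) t := by
    refine ((hasDerivAt_const t (‖x‖ ^ 2)).div ((hasDerivAt_id t).const_mul 4)
      (mul_ne_zero four_ne_zero ht)).congr_deriv ?_
    simp only [id]
    field_simp
    ring
  simpa only [heatWeight, mul_comm] using hexponent.exp

lemma one_add_norm_pow_mul_heatWeight_isBigO (N : ℕ) (ht : t < 0) :
    (fun x : E => (1 + ‖x‖) ^ N * heatWeight t x) =O[⊤] heatWeight (2 * t) := by
  refine isBigO_top.2 ⟨N.factorial * exp (1 - 2 * t), fun x => ?_⟩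
  rw [norm_of_nonneg (mul_nonneg (by positivity) (heatWeight_pos t x).le),
    norm_of_nonneg (heatWeight_pos _ x).le]
  have pow_le : (1 + ‖x‖) ^ N ≤ N.factorial * exp (1 + ‖x‖) :=
    (div_le_iff₀' (by positivity)).1 (pow_div_factorial_le_exp _ (by positivity) N)
  have exponent_le : 1 + ‖x‖ + ‖x‖ ^ 2 / (4 * t) ≤ 1 - 2 * t + ‖x‖ ^ 2 / (4 * (2 * t)) := by
    have square : 1 + ‖x‖ + ‖x‖ ^ 2 / (4 * t) - (1 - 2 * t + ‖x‖ ^ 2 / (4 * (2 * t)))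
        = (‖x‖ + 4 * t) ^ 2 / (8 * t) := by
      field_simp [ht.ne]
      ring
    have : (‖x‖ + 4 * t) ^ 2 / (8 * t) ≤ 0 :=
      div_nonpos_of_nonneg_of_nonpos (sq_nonneg _) (by linarith)
    linarith
  calc (1 + ‖x‖) ^ N * heatWeight t x
      ≤ N.factorial * exp (1 + ‖x‖) * heatWeight t x :=
        mul_le_mul_of_nonneg_right pow_le (heatWeight_pos t x).le
    _ = N.factorial * exp (1 + ‖x‖ + ‖x‖ ^ 2 / (4 * t)) := by
        rw [exp_add (1 + ‖x‖), heatWeight, mul_assoc]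
    _ ≤ N.factorial * exp (1 - 2 * t + ‖x‖ ^ 2 / (4 * (2 * t))) := by gcongr
    _ = N.factorial * exp (1 - 2 * t) * heatWeight (2 * t) x := by
        rw [exp_add (1 - 2 * t), heatWeight, mul_assoc]

variable [InnerProductSpace ℝ E]

lemma hasFDerivAt_heatWeight (t : ℝ) (x : E) :
    HasFDerivAt (heatWeight t) ((heatWeight t x / (2 * t)) • innerSL ℝ x) x := by
  have hexponent : HasFDerivAt (fun y : E => ‖y‖ ^ 2 * (4 * t)⁻¹)
      ((4 * t)⁻¹ • (2 • innerSL ℝ x)) x :=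
    (hasStrictFDerivAt_norm_sq x).hasFDerivAt.mul_const _
  refine hexponent.exp.congr_fderiv ?_
  ext y
  simp only [heatWeight, smul_apply, smul_eq_mul, nsmul_eq_mul, div_eq_mul_inv, mul_inv]
  norm_num
  ring

lemma fderiv_heatWeight_apply (t : ℝ) (x e : E) :
    fderiv ℝ (heatWeight t) x e = inner ℝ x e / (2 * t) * heatWeight t x := by
  rw [(hasFDerivAt_heatWeight t x).fderiv]
  simp only [smul_apply, smul_eq_mul, innerSL_apply_apply]
  ring

variable [FiniteDimensional ℝ E] [MeasurableSpace E] [BorelSpace E]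

lemma integrable_heatWeight (ht : t < 0) : Integrable (heatWeight t : E → ℝ) := by
  have hre : 0 < ((-(4 * t)⁻¹ : ℝ) : ℂ).re := by
    simpa only [Complex.ofReal_re, Left.neg_pos_iff, inv_lt_zero] using by linarith
  refine (GaussianFourier.integrable_cexp_neg_mul_sq_norm_add hre 0 (0 : E)).norm.congr
    (.of_forall fun x => ?_)
  have hexponent : -((-(4 * t)⁻¹ : ℝ) : ℂ) * (‖x‖ : ℂ) ^ 2 + 0 * (inner ℝ 0 x : ℂ)
      = ((‖x‖ ^ 2 / (4 * t) : ℝ) : ℂ) := by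
    push_cast
    ring
  simp only [Complex.norm_exp, hexponent, Complex.ofReal_re, heatWeight]

lemma integrable_mul_heatWeight {f : E → ℝ} (hf : Continuous f) (hf_growth : PolyGrowth ⊤ id f)
    (ht : t < 0) : Integrable fun x => f x * heatWeight t x := by
  obtain ⟨N, hN⟩ := hf_growth
  have hbound : (fun x => f x * heatWeight t x) =O[⊤] heatWeight (2 * t) :=
    (hN.mul (isBigO_refl _ _)).trans (one_add_norm_pow_mul_heatWeight_isBigO N ht)
  exact hbound.integrable (hf.mul (continuous_heatWeight t)).aestronglyMeasurable
    (integrable_heatWeight (by linarith))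

end HeatWeight

section IntegrationByParts

variable {E : Type*} [NormedAddCommGroup E] [InnerProductSpace ℝ E] {m : ℕ} {t : ℝ} {f : E → ℝ}

lemma fderiv_mul_inner_apply {x : E} (hf : DifferentiableAt ℝ f x) (e e' : E) :
    fderiv ℝ (fun y => f y * inner ℝ y e') x e
      = fderiv ℝ f x e * inner ℝ x e' + inner ℝ e e' * f x := by
  have hinner : HasFDerivAt (fun y : E => inner ℝ y e') (innerSL ℝ e') x :=
    (innerSL ℝ e').hasFDerivAt.congr_of_eventuallyEq (.of_forall fun y => real_inner_comm e' y)
  rw [fderiv_fun_mul hf hinner.differentiableAt, hinner.fderiv]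
  simp only [add_apply, smul_apply, smul_eq_mul, innerSL_apply_apply, real_inner_comm e]
  ring

namespace TemperateUpTo

lemma mul_inner (hf : TemperateUpTo m f) (e : E) : TemperateUpTo m fun x => f x * inner ℝ x e :=
  hf.mul (temperateUpTo_of_hasTemperateGrowth (Function.hasTemperateGrowth_inner_left e) m)

variable [FiniteDimensional ℝ E] [MeasurableSpace E] [BorelSpace E]

lemma integrable_mul_heatWeight (hf : TemperateUpTo m f) (ht : t < 0) :
    Integrable fun x => f x * heatWeight t x :=
  _root_.integrable_mul_heatWeight hf.contDiff.continuous hf.polyGrowth ht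

lemma integrable_mul_norm_sq_mul_heatWeight (hf : TemperateUpTo m f) (ht : t < 0) :
    Integrable fun x => f x * ‖x‖ ^ 2 * heatWeight t x :=
  _root_.integrable_mul_heatWeight (hf.contDiff.continuous.mul (continuous_norm.pow 2))
    hf.polyGrowth.mul_norm_sq ht

lemma integrable_iteratedFDeriv_two_mul_heatWeight (hf : TemperateUpTo 2 f) (ht : t < 0)
    (e e' : E) : Integrable fun x => iteratedFDeriv ℝ 2 f x ![e, e'] * heatWeight t x := by
  simpa only [iteratedFDeriv_two_apply_eq_fderiv_fderiv_apply hf.contDiff]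
    using ((hf.fderiv_apply e').fderiv_apply e).integrable_mul_heatWeight ht

lemma integrable_laplacian_mul_heatWeight (hf : TemperateUpTo 2 f) (ht : t < 0) :
    Integrable fun x => Δ f x * heatWeight t x :=
  _root_.integrable_mul_heatWeight (continuous_laplacian hf.contDiff)
    (hf.polyGrowth_iteratedFDeriv 2 le_rfl).laplacian ht

end TemperateUpTo

variable [FiniteDimensional ℝ E] [MeasurableSpace E] [BorelSpace E]

lemma integral_fderiv_apply_mul_heatWeight (hf : TemperateUpTo 1 f) (ht : t < 0) (e : E) :
    ∫ x, fderiv ℝ f x e * heatWeight t x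
      = -(1 / (2 * t)) * ∫ x, f x * inner ℝ x e * heatWeight t x := by
  have weight_deriv (x : E) : f x * fderiv ℝ (heatWeight t) x e
      = 1 / (2 * t) * (f x * inner ℝ x e * heatWeight t x) := by
    rw [fderiv_heatWeight_apply]
    ring
  have by_parts : ∫ x, f x * fderiv ℝ (heatWeight t) x e
      = -∫ x, fderiv ℝ f x e * heatWeight t x := by
    refine integral_mul_fderiv_eq_neg_fderiv_mul_of_integrable
      ((hf.fderiv_apply e).integrable_mul_heatWeight ht) ?_ (hf.integrable_mul_heatWeight ht)
      (fun x _ => hf.contDiff.differentiable (by norm_num) x)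
      (fun x _ => (hasFDerivAt_heatWeight t x).differentiableAt)
    simpa only [weight_deriv] using ((hf.mul_inner e).integrable_mul_heatWeight ht).const_mul _
  simp only [weight_deriv, integral_const_mul] at by_parts
  linear_combination by_parts

lemma integral_iteratedFDeriv_two_mul_heatWeight (hf : TemperateUpTo 2 f) (ht : t < 0)
    (e e' : E) :
    ∫ x, iteratedFDeriv ℝ 2 f x ![e, e'] * heatWeight t x
      = inner ℝ e e' / (2 * t) * (∫ x, f x * heatWeight t x)
        + 1 / (4 * t ^ 2) * ∫ x, f x * (inner ℝ x e * inner ℝ x e') * heatWeight t x := by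
  have first_parts : ∫ x, iteratedFDeriv ℝ 2 f x ![e, e'] * heatWeight t x
      = -(1 / (2 * t)) * ∫ x, fderiv ℝ f x e' * inner ℝ x e * heatWeight t x := by
    simp only [iteratedFDeriv_two_apply_eq_fderiv_fderiv_apply hf.contDiff]
    exact integral_fderiv_apply_mul_heatWeight (hf.fderiv_apply e') ht e
  have second_parts : (∫ x, fderiv ℝ f x e' * inner ℝ x e * heatWeight t x)
      + inner ℝ e' e * ∫ x, f x * heatWeight t x
      = -(1 / (2 * t)) * ∫ x, f x * (inner ℝ x e * inner ℝ x e') * heatWeight t x := by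
    rw [← integral_const_mul, ← integral_add
      (((hf.fderiv_apply e').mul_inner e).integrable_mul_heatWeight ht)
      ((hf.integrable_mul_heatWeight ht).const_mul _)]
    simpa only [fderiv_mul_inner_apply (hf.contDiff.differentiable two_ne_zero _), add_mul,
      mul_assoc] using
      integral_fderiv_apply_mul_heatWeight ((hf.of_le one_le_two).mul_inner e) ht e'
  rw [real_inner_comm] at second_parts
  linear_combination first_parts - 1 / (2 * t) * second_parts

lemma integral_laplacian_mul_heatWeight (hf : TemperateUpTo 2 f) (ht : t < 0) :
    ∫ x, Δ f x * heatWeight t x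
      = finrank ℝ E / (2 * t) * (∫ x, f x * heatWeight t x)
        + 1 / (4 * t ^ 2) * ∫ x, f x * ‖x‖ ^ 2 * heatWeight t x := by
  let b := stdOrthonormalBasis ℝ E
  have sum_inner_sq : ∑ i, ∫ x, f x * inner ℝ x (b i) ^ 2 * heatWeight t x
      = ∫ x, f x * ‖x‖ ^ 2 * heatWeight t x := by
    rw [← integral_finsetSum _ fun i _ => by
      simpa only [mul_assoc, sq (inner ℝ _ (b i))]
        using ((hf.mul_inner (b i)).mul_inner (b i)).integrable_mul_heatWeight ht]
    simp only [← Finset.sum_mul, ← Finset.mul_sum, b.sum_sq_inner_left]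
  calc ∫ x, Δ f x * heatWeight t x
      = ∑ i, ∫ x, iteratedFDeriv ℝ 2 f x ![b i, b i] * heatWeight t x := by
        rw [← integral_finsetSum _ fun i _ =>
          hf.integrable_iteratedFDeriv_two_mul_heatWeight ht (b i) (b i)]
        simp only [laplacian_eq_iteratedFDeriv_orthonormalBasis f b, Finset.sum_mul]
    _ = _ := by
        simp only [integral_iteratedFDeriv_two_mul_heatWeight hf ht,
          real_inner_self_eq_norm_sq, b.norm_eq_one, one_pow, ← sq (inner ℝ _ _),
          Finset.sum_add_distrib, Finset.sum_const, Finset.card_univ, Fintype.card_fin,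
          nsmul_eq_mul, ← Finset.mul_sum, sum_inner_sq]
        ring

end IntegrationByParts

section BackwardHeatMean

lemma hasDerivAt_neg_four_pi_mul_rpow {t : ℝ} (ht : t < 0) (m : ℝ) :
    HasDerivAt (fun s => (-4 * π * s) ^ (-m / 2))
      (-(m / (2 * t)) * (-4 * π * t) ^ (-m / 2)) t := by
  have hpos : 0 < -4 * π * t := mul_pos_of_neg_of_neg (by linarith [pi_pos]) ht
  refine (((hasDerivAt_id t).const_mul (-4 * π)).rpow_const (.inl hpos.ne')).congr_deriv ?_
  simp only [id, mul_one]
  rw [rpow_sub_one hpos.ne']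
  field_simp [ht.ne, pi_pos.ne']

variable {E : Type*} [NormedAddCommGroup E] [InnerProductSpace ℝ E] [FiniteDimensional ℝ E]
  [MeasurableSpace E] [BorelSpace E] {t : ℝ} {w w' : ℝ → E → ℝ}

lemma hasDerivAt_integral_mul_heatWeight (ht : t < 0)
    (hw_cont : ∀ᶠ s in 𝓝 t, Continuous (w s)) (hw'_cont : Continuous (w' t))
    (hw_deriv : ∀ᶠ s in 𝓝 t, ∀ x, HasDerivAt (fun r => w r x) (w' s x) s)
    (hw_growth : PolyGrowth (𝓝 t ×ˢ ⊤) Prod.snd fun p => w p.1 p.2)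
    (hw'_growth : PolyGrowth (𝓝 t ×ˢ ⊤) Prod.snd fun p => w' p.1 p.2) :
    HasDerivAt (fun s => ∫ x, w s x * heatWeight s x)
      (∫ x, (w' t x - 1 / (4 * t ^ 2) * (w t x * ‖x‖ ^ 2)) * heatWeight t x) t := by
  let c (s : ℝ) (x : E) : ℝ := w' s x - 1 / (4 * s ^ 2) * (w s x * ‖x‖ ^ 2)
  have time_factor : Tendsto (fun s : ℝ => 1 / (4 * s ^ 2)) (𝓝 t) (𝓝 (1 / (4 * t ^ 2))) :=
    ContinuousAt.div (by fun_prop) (by fun_prop) (by simp [ht.ne])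
  have c_growth : PolyGrowth (𝓝 t ×ˢ ⊤) Prod.snd fun p => c p.1 p.2 :=
    hw'_growth.sub ((PolyGrowth.of_tendsto (time_factor.comp tendsto_fst)).mul
      hw_growth.mul_norm_sq)
  obtain ⟨N, hN⟩ := c_growth
  obtain ⟨K, hK⟩ := hN.bound
  have near_t : ∀ᶠ s in 𝓝 t, (∀ x, ‖c s x‖ ≤ K * ‖(1 + ‖x‖) ^ N‖) ∧
      (∀ x, HasDerivAt (fun r => w r x) (w' s x) s) ∧ s ∈ Set.Ioo (2 * t) 0 :=
    (eventually_of_mem (mem_prod_top.1 hK) fun _ h => h).and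
      (hw_deriv.and (Ioo_mem_nhds (by linarith) ht))
  refine (hasDerivAt_integral_of_dominated_loc_of_deriv_le
    (F' := fun s x => c s x * heatWeight s x)
    (bound := fun x => K * ‖(1 + ‖x‖) ^ N‖ * heatWeight (2 * t) x) near_t
    ?_ ?_ ?_ ?_ ?_ ?_).2
  · filter_upwards [hw_cont] with s hs
    exact (hs.mul (continuous_heatWeight s)).aestronglyMeasurable
  · exact integrable_mul_heatWeight hw_cont.self_of_nhds hw_growth.slice ht
  · have := hw_cont.self_of_nhds
    have := continuous_heatWeight (E := E) t
    exact Continuous.aestronglyMeasurable (by fun_prop)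
  · refine .of_forall fun x s ⟨hcs, _, hs, hs_neg⟩ => ?_
    rw [norm_mul, norm_of_nonneg (heatWeight_pos s x).le]
    exact mul_le_mul (hcs x) (heatWeight_le_heatWeight (by linarith) hs.le hs_neg x)
      (heatWeight_pos s x).le ((norm_nonneg _).trans (hcs x))
  · exact integrable_mul_heatWeight (by fun_prop)
      ⟨N, ((isBigO_refl _ _).norm_left.const_mul_left K)⟩ (by linarith)
  · refine .of_forall fun x s ⟨_, hws, _, hs_neg⟩ => ?_
    refine ((hws x).mul (hasDerivAt_heatWeight hs_neg.ne x)).congr_deriv ?_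
    simp only [c]
    ring

/-- The integral of `f` against the backward heat kernel
`(-4πt) ^ (-dim E / 2) * exp (‖x‖² / 4t)` at time `t < 0`. For `f = u(·, t)²` this is `I_u(t)`. -/
noncomputable def backwardHeatMean (t : ℝ) (f : E → ℝ) : ℝ :=
  (-4 * π * t) ^ (-(finrank ℝ E : ℝ) / 2) * ∫ x, f x * heatWeight t x

lemma backwardHeatMean_nonneg (ht : t < 0) {f : E → ℝ} (hf : ∀ x, 0 ≤ f x) :
    0 ≤ backwardHeatMean t f :=
  mul_nonneg (rpow_nonneg (mul_nonneg_of_nonpos_of_nonpos (by linarith [pi_pos]) ht.le) _)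
    (integral_nonneg fun x => mul_nonneg (hf x) (heatWeight_pos t x).le)

lemma backwardHeatMean_const_mul (t a : ℝ) (f : E → ℝ) :
    backwardHeatMean t (fun x => a * f x) = a * backwardHeatMean t f := by
  simp only [backwardHeatMean, mul_assoc, integral_const_mul]
  ring

lemma hasDerivAt_backwardHeatMean (ht : t < 0)
    (hw_cont : ∀ᶠ s in 𝓝 t, Continuous (w s)) (hw'_cont : Continuous (w' t))
    (hw_deriv : ∀ᶠ s in 𝓝 t, ∀ x, HasDerivAt (fun r => w r x) (w' s x) s)
    (hw_growth : PolyGrowth (𝓝 t ×ˢ ⊤) Prod.snd fun p => w p.1 p.2)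
    (hw'_growth : PolyGrowth (𝓝 t ×ˢ ⊤) Prod.snd fun p => w' p.1 p.2)
    (hwt : TemperateUpTo 2 (w t)) :
    HasDerivAt (fun s => backwardHeatMean s (w s))
      (backwardHeatMean t fun x => w' t x - Δ (w t) x) t := by
  have int_w' := integrable_mul_heatWeight hw'_cont hw'_growth.slice ht
  have adjoint : (∫ x, (w' t x - 1 / (4 * t ^ 2) * (w t x * ‖x‖ ^ 2)) * heatWeight t x)
      - finrank ℝ E / (2 * t) * ∫ x, w t x * heatWeight t x
      = ∫ x, (w' t x - Δ (w t) x) * heatWeight t x := by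
    simp only [sub_mul, mul_assoc (1 / (4 * t ^ 2))]
    rw [integral_sub int_w' ((hwt.integrable_mul_norm_sq_mul_heatWeight ht).const_mul _),
      integral_sub int_w' (hwt.integrable_laplacian_mul_heatWeight ht),
      integral_laplacian_mul_heatWeight hwt ht, integral_const_mul]
    ring
  refine ((hasDerivAt_neg_four_pi_mul_rpow ht _).mul (hasDerivAt_integral_mul_heatWeight ht
    hw_cont hw'_cont hw_deriv hw_growth hw'_growth)).congr_deriv ?_
  rw [backwardHeatMean, ← adjoint]
  ring

end BackwardHeatMean

section Caloric

variable {E : Type*} [NormedAddCommGroup E] [InnerProductSpace ℝ E] [FiniteDimensional ℝ E]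
  [MeasurableSpace E] [BorelSpace E] {u : ℝ → E → ℝ}

lemma hasDerivAt_backwardHeatMean_sq {t : ℝ} (ht : t < 0)
    (hu : ∀ᶠ s in 𝓝 t, ContDiff ℝ 2 (u s))
    (hcal : ∀ᶠ s in 𝓝 t, ∀ x, HasDerivAt (fun r => u r x) (Δ (u s) x) s)
    (hgrowth : ∀ k ≤ 2, PolyGrowth (𝓝 t ×ˢ ⊤) Prod.snd fun p => iteratedFDeriv ℝ k (u p.1) p.2) :
    HasDerivAt (fun s => backwardHeatMean s fun x => u s x ^ 2)
      (-2 * backwardHeatMean t fun x => ‖fderiv ℝ (u t) x‖ ^ 2) t := by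
  have hut : TemperateUpTo 2 (u t) := ⟨hu.self_of_nhds, fun k hk =>
    (hgrowth k hk).slice (w := fun s => iteratedFDeriv ℝ k (u s))⟩
  have u_growth : PolyGrowth (𝓝 t ×ˢ ⊤) Prod.snd fun p => u p.1 p.2 :=
    (hgrowth 0 zero_le_two).of_norm_le fun _ => norm_iteratedFDeriv_zero.ge
  have laplacian_growth : PolyGrowth (𝓝 t ×ˢ ⊤) Prod.snd fun p => Δ (u p.1) p.2 :=
    (hgrowth 2 le_rfl).laplacian
  have heat_operator_sq (x : E) :
      2 * u t x * Δ (u t) x - Δ (fun y => u t y ^ 2) x = -2 * ‖fderiv ℝ (u t) x‖ ^ 2 := by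
    rw [laplacian_sq hut.contDiff]
    ring
  rw [← backwardHeatMean_const_mul]
  simp only [← heat_operator_sq]
  refine hasDerivAt_backwardHeatMean (w' := fun s x => 2 * u s x * Δ (u s) x) ht
    ?_ ?_ ?_ ?_ ?_ ?_
  · filter_upwards [hu] with s hs using hs.continuous.pow 2
  · exact (continuous_const.mul hut.contDiff.continuous).mul (continuous_laplacian hut.contDiff)
  · filter_upwards [hcal] with s hs x
    simpa using (hs x).fun_pow 2
  · simpa only [sq] using u_growth.mul u_growth
  · exact ((PolyGrowth.const 2).mul u_growth).mul laplacian_growth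
  · simpa only [sq] using hut.mul hut

theorem Iu_derivative_formula_euclidean_general (hu : ∀ t < 0, ContDiff ℝ 2 (u t))
    (hcal : ∀ t < 0, ∀ x, HasDerivAt (fun s => u s x) (Δ (u t) x) t)
    (hgrowth : ∀ t < 0, ∀ k ≤ 2,
      PolyGrowth (𝓝 t ×ˢ ⊤) Prod.snd fun p => iteratedFDeriv ℝ k (u p.1) p.2) :
    (∀ t < 0,
      HasDerivAt (fun s => backwardHeatMean s fun x => u s x ^ 2)
        (-2 * backwardHeatMean t fun x => ‖fderiv ℝ (u t) x‖ ^ 2) t ∧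
      -2 * backwardHeatMean t (fun x => ‖fderiv ℝ (u t) x‖ ^ 2) ≤ 0) ∧
    AntitoneOn (fun t => backwardHeatMean t fun x => u t x ^ 2) (Set.Iio 0) := by
  have eventually_neg {t : ℝ} (ht : t < 0) : ∀ᶠ s in 𝓝 t, s < 0 := eventually_lt_nhds ht
  have hderiv (t : ℝ) (ht : t < 0) := hasDerivAt_backwardHeatMean_sq ht
    ((eventually_neg ht).mono hu) ((eventually_neg ht).mono hcal) (hgrowth t ht)
  have hnonpos (t : ℝ) (ht : t < 0) :
      -2 * backwardHeatMean t (fun x => ‖fderiv ℝ (u t) x‖ ^ 2) ≤ 0 :=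
    mul_nonpos_of_nonpos_of_nonneg (by norm_num) (backwardHeatMean_nonneg ht fun _ => sq_nonneg _)
  refine ⟨fun t ht => ⟨hderiv t ht, hnonpos t ht⟩,
    antitoneOn_of_hasDerivWithinAt_nonpos (convex_Iio 0)
      (fun t ht => (hderiv t ht).continuousAt.continuousWithinAt)
      (fun t ht => (hderiv t ?_).hasDerivWithinAt) fun t ht => hnonpos t ?_⟩
  all_goals rwa [interior_Iio] at ht

end Caloric

section GrowthHypothesis

lemma polyGrowth_one_add_norm_rpow_add_abs_rpow {E : Type*} [NormedAddCommGroup E] {d : ℝ}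
    (hd : 0 ≤ d) (t : ℝ) :
    PolyGrowth (𝓝 t ×ˢ ⊤) Prod.snd fun p : ℝ × E => 1 + ‖p.2‖ ^ d + |p.1| ^ (d / 2) := by
  have norm_rpow : PolyGrowth (𝓝 t ×ˢ ⊤) Prod.snd fun p : ℝ × E => ‖p.2‖ ^ d := by
    refine ⟨⌈d⌉₊, IsBigO.of_norm_le fun p => ?_⟩
    rw [norm_of_nonneg (by positivity), ← rpow_natCast]
    calc ‖p.2‖ ^ d ≤ (1 + ‖p.2‖) ^ d := by gcongr; linarith
      _ ≤ (1 + ‖p.2‖) ^ (⌈d⌉₊ : ℝ) :=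
        rpow_le_rpow_of_exponent_le (by linarith [norm_nonneg p.2]) (Nat.le_ceil d)
  have abs_rpow : Tendsto (fun p : ℝ × E => |p.1| ^ (d / 2)) (𝓝 t ×ˢ ⊤) (𝓝 (|t| ^ (d / 2))) :=
    (tendsto_fst.abs).rpow_const (.inr (by positivity))
  exact ((PolyGrowth.const 1).add norm_rpow).add (.of_tendsto abs_rpow)

lemma polyGrowth_iteratedFDeriv_of_growth {E : Type*} [NormedAddCommGroup E] [NormedSpace ℝ E]
    {v : ℝ → E → ℝ} {C d : ℝ} (hd : 0 ≤ d)
    (hgrowth : ∀ (x : E) (t : ℝ), t < 0 →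
      |v t x| + ‖fderiv ℝ (v t) x‖ + ‖iteratedFDeriv ℝ 2 (v t) x‖ ≤
        C * (1 + ‖x‖ ^ d + |t| ^ (d / 2)))
    {t : ℝ} (ht : t < 0) {k : ℕ} (hk : k ≤ 2) :
    PolyGrowth (𝓝 t ×ˢ ⊤) Prod.snd fun p => iteratedFDeriv ℝ k (v p.1) p.2 := by
  refine ((PolyGrowth.const C).mul
    (polyGrowth_one_add_norm_rpow_add_abs_rpow hd t)).of_eventually_norm_le ?_
  filter_upwards [tendsto_fst.eventually (eventually_lt_nhds ht)] with ⟨s, x⟩ hs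
  refine le_trans ?_ ((hgrowth x s hs).trans (le_norm_self _))
  have value_nonneg := abs_nonneg (v s x)
  have fderiv_nonneg := norm_nonneg (fderiv ℝ (v s) x)
  have hessian_nonneg := norm_nonneg (iteratedFDeriv ℝ 2 (v s) x)
  interval_cases k
  · rw [norm_iteratedFDeriv_zero, norm_eq_abs]
    linarith
  · rw [norm_iteratedFDeriv_one]
    linarith
  · linarith

end GrowthHypothesis

/-- Euclidean-space case of the derivative formula for
`I_u(t) = (−4πt)^{−n/2} ∫ u(x,t)² e^{‖x‖²/4t} dx` along a caloric function with
polynomially bounded derivatives: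
`I_u′(t) = −2(−4πt)^{−n/2} ∫ ‖∇ₓu‖² e^{‖x‖²/4t} dx ≤ 0`, so `I_u` is nonincreasing. -/
theorem Iu_derivative_formula_euclidean (n : ℕ)
    (u : EuclideanSpace ℝ (Fin n) × ℝ → ℝ) (hu : ContDiff ℝ (⊤ : ℕ∞) u)
    (hcal : ∀ (x : EuclideanSpace ℝ (Fin n)) (t : ℝ), t < 0 →
      deriv (fun s => u (x, s)) t = lap (fun y => u (y, t)) x)
    (C d : ℝ) (hd : 1 ≤ d)
    (hgrowth : ∀ (x : EuclideanSpace ℝ (Fin n)) (t : ℝ), t < 0 →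
      |u (x, t)| + ‖fderiv ℝ (fun y => u (y, t)) x‖ +
          ‖iteratedFDeriv ℝ 2 (fun y => u (y, t)) x‖ ≤
        C * (1 + ‖x‖ ^ d + |t| ^ (d / 2))) :
    (∀ t : ℝ, t < 0 →
      HasDerivAt
        (fun s : ℝ => (-4 * π * s) ^ (-(n : ℝ) / 2) *
          ∫ x, (u (x, s)) ^ 2 * exp (‖x‖ ^ 2 / (4 * s)))
        (-2 * (-4 * π * t) ^ (-(n : ℝ) / 2) *
          ∫ x, ‖fderiv ℝ (fun y => u (y, t)) x‖ ^ 2 * exp (‖x‖ ^ 2 / (4 * t))) t ∧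
      -2 * (-4 * π * t) ^ (-(n : ℝ) / 2) *
          (∫ x, ‖fderiv ℝ (fun y => u (y, t)) x‖ ^ 2 * exp (‖x‖ ^ 2 / (4 * t))) ≤ 0) ∧
    AntitoneOn
      (fun t : ℝ => (-4 * π * t) ^ (-(n : ℝ) / 2) *
        ∫ x, (u (x, t)) ^ 2 * exp (‖x‖ ^ 2 / (4 * t)))
      (Set.Iio 0) := by
  have hspace (t : ℝ) : ContDiff ℝ 2 fun y => u (y, t) :=
    (contDiff_infty.1 hu 2).comp (contDiff_id.prodMk contDiff_const)
  have htime (t : ℝ) (ht : t < 0) (x : EuclideanSpace ℝ (Fin n)) :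
      HasDerivAt (fun s => u (x, s)) (Δ (fun y => u (y, t)) x) t := by
    rw [← lap_eq_laplacian (hspace t), ← hcal x t ht]
    exact (hu.comp (contDiff_const.prodMk contDiff_id)).differentiable (by norm_num) t |>.hasDerivAt
  simpa only [backwardHeatMean, heatWeight, finrank_euclideanSpace_fin, mul_assoc] using
    Iu_derivative_formula_euclidean_general (fun t _ => hspace t) htime fun t ht k hk =>
      polyGrowth_iteratedFDeriv_of_growth (v := fun t y => u (y, t)) (by linarith) hgrowth ht hk
end

section
/- Let Ω > 1, δ > 0, d > 0, C > 0, ℓ ≥ 1 an integer, and for i = 1, …, ℓ let g_i : ℕ → ℝ be functions for which there exists m₀ ∈ ℕ such that 0 < g_i(m) ≤ g_i(m+1) for all m ≥ m₀ and all i, and g_i(m) ≤ C(1 + Ω^m)^d for all m and all i. Then there are infinitely many m ∈ ℕ with (1/ℓ) · Σ_{i=1}^{ℓ} g_i(m)/g_i(m+1) ≥ Ω^{−d − δ/ℓ}. (Sequence form of the paper's Lemma 4.3, whose proof combines a pigeonhole argument on the products Π_i g_i(m) with the arithmetic–geometric mean inequality.) -/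
open Real

open Asymptotics Filter Finset

/-!
If the mean of the ratios `g i m / g i (m + 1)` were eventually below `b⁻¹`, then by AM-GM the
product `P m = ∏ i, g i m` would eventually satisfy `P (m + 1) ≥ b ^ ℓ * P m`, so `P` would grow at
least like `(b ^ ℓ) ^ m`. With `b = Ω ^ (d + δ / ℓ)` this contradicts `P m = O((Ω ^ (d * ℓ)) ^ m)`.
-/

theorem prod_le_mean_pow_card {ι : Type*} (s : Finset ι) (z : ι → ℝ) (hz : ∀ i ∈ s, 0 ≤ z i) :
    ∏ i ∈ s, z i ≤ ((1 / #s) * ∑ i ∈ s, z i) ^ #s := by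
  obtain rfl | hs := s.eq_empty_or_nonempty
  · simp
  have hcard : #s ≠ 0 := hs.card_ne_zero
  have geom_le_arith : (∏ i ∈ s, z i) ^ (#s : ℝ)⁻¹ ≤ (1 / #s) * ∑ i ∈ s, z i := by
    simpa [hs.card_pos, div_eq_inv_mul] using
      Real.geom_mean_le_arith_mean s (fun _ ↦ 1) z (by simp) (by simpa using hs) hz
  calc ∏ i ∈ s, z i = ((∏ i ∈ s, z i) ^ (#s : ℝ)⁻¹) ^ #s :=
        (Real.rpow_inv_natCast_pow (prod_nonneg hz) hcard).symm
    _ ≤ _ := pow_le_pow_left₀ (Real.rpow_nonneg (prod_nonneg hz) _) geom_le_arith _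

theorem isBigO_pow_of_eventually_mul_le_succ {p : ℕ → ℝ} {b : ℝ} (hb : 0 < b)
    (hpos : ∀ᶠ m in atTop, 0 < p m) (hgrow : ∀ᶠ m in atTop, b * p m ≤ p (m + 1)) :
    (fun m ↦ b ^ m) =O[atTop] p := by
  obtain ⟨N, hN⟩ := eventually_atTop.mp (hpos.and hgrow)
  have hpN : 0 < p N := (hN N le_rfl).1
  refine .of_bound (b ^ N / p N) (eventually_atTop.mpr ⟨N, fun m hm ↦ ?_⟩)
  obtain ⟨k, rfl⟩ := Nat.exists_eq_add_of_le hm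
  have geom_growth : b ^ k * p N ≤ p (N + k) :=
    geom_le (u := fun k ↦ p (N + k)) hb.le k fun j _ ↦ (hN (N + j) (by lia)).2
  rw [norm_of_nonneg (by positivity), norm_of_nonneg (hN _ hm).1.le, div_mul_eq_mul_div,
    le_div_iff₀ hpN, pow_add, mul_assoc]
  gcongr

theorem frequently_succ_lt_mul_of_isBigO_pow {p : ℕ → ℝ} {a b : ℝ} (ha : 0 ≤ a) (hab : a < b)
    (hpos : ∀ᶠ m in atTop, 0 < p m) (hp : p =O[atTop] fun m ↦ a ^ m) :
    ∃ᶠ m in atTop, p (m + 1) < b * p m := by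
  intro hgrow
  have hb : 0 < b := ha.trans_lt hab
  have pow_isBigO : (fun m ↦ b ^ m) =O[atTop] p :=
    isBigO_pow_of_eventually_mul_le_succ hb hpos (hgrow.mono fun _ ↦ not_lt.mp)
  exact isLittleO_irrefl (Frequently.of_forall fun m ↦ (pow_pos hb m).ne')
    ((pow_isBigO.trans hp).trans_isLittleO (isLittleO_pow_pow_of_lt_left ha hab))

theorem frequently_inv_le_mean_div_succ {ι : Type*} [Fintype ι] [Nonempty ι] {g : ι → ℕ → ℝ}
    {a b : ℝ} (ha : 0 ≤ a) (hab : a < b) (hpos : ∀ᶠ m in atTop, ∀ i, 0 < g i m)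
    (hg : ∀ i, g i =O[atTop] fun m ↦ a ^ m) :
    ∃ᶠ m in atTop, b⁻¹ ≤ (1 / Fintype.card ι) * ∑ i, g i m / g i (m + 1) := by
  have hb : 0 < b := ha.trans_lt hab
  have hprod_pos : ∀ᶠ m in atTop, 0 < ∏ i, g i m :=
    hpos.mono fun m hm ↦ prod_pos fun i _ ↦ hm i
  have prod_isBigO : (fun m ↦ ∏ i, g i m) =O[atTop] fun m ↦ (a ^ Fintype.card ι) ^ m := by
    simpa [← pow_mul, mul_comm] using IsBigO.finsetProd (s := univ) fun i _ ↦ hg i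
  have prod_succ_lt := frequently_succ_lt_mul_of_isBigO_pow (pow_nonneg ha _)
    (pow_lt_pow_left₀ hab ha Fintype.card_ne_zero) hprod_pos prod_isBigO
  refine (prod_succ_lt.and_eventually
    (hpos.and ((tendsto_add_atTop_nat 1).eventually hpos))).mono ?_
  rintro m ⟨hlt, hm, hm'⟩
  have ratio_nonneg (i : ι) : 0 ≤ g i m / g i (m + 1) := (div_pos (hm i) (hm' i)).le
  refine le_of_pow_le_pow_left₀ (Fintype.card_ne_zero (α := ι))
    (mul_nonneg (by positivity) (sum_nonneg fun i _ ↦ ratio_nonneg i)) ?_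
  calc b⁻¹ ^ Fintype.card ι ≤ (∏ i, g i m) / ∏ i, g i (m + 1) := by
        rw [inv_pow, inv_le_iff_one_le_mul₀ (by positivity), div_mul_eq_mul_div,
          one_le_div (prod_pos fun i _ ↦ hm' i), mul_comm]
        exact hlt.le
    _ = ∏ i, g i m / g i (m + 1) := (prod_div_distrib _ _).symm
    _ ≤ _ := prod_le_mean_pow_card univ _ fun i _ ↦ ratio_nonneg i

theorem one_add_pow_rpow_isBigO {Ω : ℝ} (hΩ : 1 < Ω) (d : ℝ) :
    (fun m : ℕ ↦ (1 + Ω ^ m) ^ d) =O[atTop] fun m ↦ (Ω ^ d) ^ m := by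
  have hΩ₀ : 0 ≤ Ω := by linarith
  have one_isLittleO : (fun _ : ℕ ↦ (1 : ℝ)) =o[atTop] fun m ↦ Ω ^ m := by
    simpa using isLittleO_pow_pow_of_lt_left zero_le_one hΩ
  have one_add_isTheta : (fun m : ℕ ↦ 1 + Ω ^ m) =Θ[atTop] fun m ↦ Ω ^ m :=
    (one_isLittleO.add_isEquivalent .refl).isTheta
  simpa only [Real.rpow_pow_comm hΩ₀] using
    (one_add_isTheta.rpow (r := d) (.of_forall fun m ↦ by positivity)
      (.of_forall fun m ↦ pow_nonneg hΩ₀ m)).isBigO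

theorem good_scales_exist_general {ι : Type*} [Fintype ι] [Nonempty ι] {g : ι → ℕ → ℝ}
    {Ω ε d C : ℝ} (hΩ : 1 < Ω) (hε : 0 < ε) (hpos : ∀ᶠ m in atTop, ∀ i, 0 < g i m)
    (hbound : ∀ i, ∀ᶠ m in atTop, g i m ≤ C * (1 + Ω ^ m) ^ d) :
    {m : ℕ | Ω ^ (-d - ε) ≤ (1 / Fintype.card ι) * ∑ i, g i m / g i (m + 1)}.Infinite := by
  have hΩ₀ : 0 < Ω := by linarith
  have g_isBigO (i : ι) : g i =O[atTop] fun m ↦ (Ω ^ d) ^ m := by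
    refine IsBigO.trans (.of_bound C ?_) (one_add_pow_rpow_isBigO hΩ d)
    filter_upwards [hpos, hbound i] with m hm hle
    rwa [norm_of_nonneg (hm i).le, norm_of_nonneg (by positivity)]
  have rpow_lt : Ω ^ d < Ω ^ (d + ε) := Real.rpow_lt_rpow_of_exponent_lt hΩ (by linarith)
  rw [← Nat.frequently_atTop_iff_infinite, ← neg_add', Real.rpow_neg hΩ₀.le]
  exact frequently_inv_le_mean_div_succ (Real.rpow_nonneg hΩ₀.le d) rpow_lt hpos g_isBigO

/-- Sequence form of the selection lemma: if each `g i` is eventually positive and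
nondecreasing and grows at most like `C(1 + Ω^m)^d`, then there are infinitely many `m`
with `(1/ℓ) Σᵢ g i m / g i (m+1) ≥ Ω^{−d−δ/ℓ}`. -/
theorem good_scales_exist (Ω δ d C : ℝ) (hΩ : 1 < Ω) (hδ : 0 < δ) (hd : 0 < d)
    (hC : 0 < C) (ℓ : ℕ) (hℓ : 1 ≤ ℓ) (g : Fin ℓ → ℕ → ℝ)
    (hmono : ∃ m₀ : ℕ, ∀ i : Fin ℓ, ∀ m : ℕ, m₀ ≤ m → 0 < g i m ∧ g i m ≤ g i (m + 1))
    (hbound : ∀ (i : Fin ℓ) (m : ℕ), g i m ≤ C * (1 + Ω ^ m) ^ d) :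
    {m : ℕ | Ω ^ (-d - δ / ℓ) ≤ (1 / ℓ) * ∑ i : Fin ℓ, g i m / g i (m + 1)}.Infinite := by
  obtain ⟨m₀, hm₀⟩ := hmono
  have : NeZero ℓ := ⟨by lia⟩
  simpa only [Fintype.card_fin] using good_scales_exist_general hΩ
    (div_pos hδ (Nat.cast_pos.mpr hℓ)) (eventually_atTop.mpr ⟨m₀, fun m hm i ↦ (hm₀ i m hm).1⟩)
    fun i ↦ .of_forall (hbound i)
end
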